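/- Fueter–Sce theorem: Let q be odd and let f(x) = F₁(x') + ωF₂(x') ∈ GSR(Ω_D). Then Δ_x^{(q−1)/2} f is left monogenic in Ω_D and Δ_x^{(q−1)/2} f(x) = (q−1)!! (A(x') + ω B(x')), where A(x') = ((1/r)∂_r)^{(q−1)/2} F₁(x') and B(x') = (∂_r ∘ (1/r)·)^{(q−1)/2} F₂(x') (values at r = 0 understood as limits as r → 0). -/

import Mathlib

open scoped BigOperators
open Filter Topology

namespace GPSM

variable (A : Type*) [NormedAddCommGroup A] [NormedSpace ℝ A] [Mul A] [One A]

/-- `A` is a real alternative algebra with unit `1`, of finite dimension `d > 1`,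
equipped with an anti-involution `conj` (a real-linear map with `(a^c)^c = a`,
`(ab)^c = b^c a^c`, fixing the reals).  The associator is alternating (left/right
alternative laws). -/
structure IsAltStarAlg (conj : A → A) : Prop where
  finDim : FiniteDimensional ℝ A
  one_lt_finrank : 1 < Module.finrank ℝ A
  mul_add' : ∀ a b c : A, a * (b + c) = a * b + a * c
  add_mul' : ∀ a b c : A, (a + b) * c = a * c + b * c
  smul_mul' : ∀ (r : ℝ) (a b : A), (r • a) * b = r • (a * b)
  mul_smul' : ∀ (r : ℝ) (a b : A), a * (r • b) = r • (a * b)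
  one_mul' : ∀ a : A, 1 * a = a
  mul_one' : ∀ a : A, a * 1 = a
  alt_left : ∀ a b : A, a * (a * b) = a * a * b
  alt_right : ∀ a b : A, a * b * b = a * (b * b)
  conj_add : ∀ a b : A, conj (a + b) = conj a + conj b
  conj_smul : ∀ (r : ℝ) (a : A), conj (r • a) = r • conj a
  conj_conj : ∀ a : A, conj (conj a) = a
  conj_mul : ∀ a b : A, conj (a * b) = conj b * conj a
  conj_one : conj 1 = 1

/-- `v 0, v 1, …, v m` is a hypercomplex basis of the hypercomplex subspace
`M = span(v 0, …, v m)` of `A`: `v 0 = 1`, `t(v s) = 0`, `n(v s) = 1`, the `v s`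
anticommute for distinct `s, t ∈ {1,…,m}`, they are linearly independent, and
`M` is contained in the quadratic cone `Q_A`. -/
structure IsHypBasis (conj : A → A) (v : ℕ → A) (m : ℕ) : Prop where
  v_zero : v 0 = 1
  trace_zero : ∀ s, 1 ≤ s → s ≤ m → v s + conj (v s) = 0
  norm_one : ∀ s, 1 ≤ s → s ≤ m → v s * conj (v s) = 1
  anticomm : ∀ s t, 1 ≤ s → s ≤ m → 1 ≤ t → t ≤ m → s ≠ t → v s * v t = -(v t * v s)
  indep : LinearIndependent ℝ (fun i : Fin (m + 1) => v i)
  mem_cone : ∀ x ∈ Submodule.span ℝ (Set.range fun i : Fin (m + 1) => v (i : ℕ)),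
      ∃ tr nr : ℝ, x + conj x = tr • (1 : A) ∧ x * conj x = nr • (1 : A) ∧
        ((∃ r : ℝ, x = r • (1 : A)) ∨ tr ^ 2 < 4 * nr)

variable {A}

/-- Identification of `ℝ^{m+1}` with the hypercomplex subspace `M`:
`(x_0,…,x_m) ↦ Σ x_s • v s`. -/
def emb (v : ℕ → A) (m : ℕ) (x : Fin (m + 1) → ℝ) : A :=
  ∑ s : Fin (m + 1), x s • v (s : ℕ)

/-- First `p+1` coordinates of a point of `M ≅ ℝ^{m+1}`, i.e. the `x_p`-part. -/
def projP (m p : ℕ) (x : Fin (m + 1) → ℝ) : Fin (p + 1) → ℝ := fun s =>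
  if h : (s : ℕ) < m + 1 then x ⟨(s : ℕ), h⟩ else 0

/-- Inclusion `ℝ^{p+1} ⊆ ℝ^{m+1}` (remaining coordinates `0`). -/
def injP (m p : ℕ) (y : Fin (p + 1) → ℝ) : Fin (m + 1) → ℝ := fun s =>
  if h : (s : ℕ) < p + 1 then y ⟨(s : ℕ), h⟩ else 0

/-- The coordinates of `x_q` (last `q = m - p` coordinates of `x`). -/
def xqpart (m p : ℕ) (x : Fin (m + 1) → ℝ) : Fin (m + 1) → ℝ := fun s =>
  if (s : ℕ) ≤ p then 0 else x s

/-- The coordinates of `x_p` inside `ℝ^{m+1}`. -/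
def xppart (m p : ℕ) (x : Fin (m + 1) → ℝ) : Fin (m + 1) → ℝ := fun s =>
  if (s : ℕ) ≤ p then x s else 0

/-- `r = |x_q|`. -/
noncomputable def rad (m p : ℕ) (x : Fin (m + 1) → ℝ) : ℝ :=
  Real.sqrt (∑ s : Fin (m + 1), (xqpart m p x s) ^ 2)

/-- `ω = x_q / |x_q|` (coordinates), `0` when `x_q = 0`. -/
noncomputable def normq (m p : ℕ) (x : Fin (m + 1) → ℝ) : Fin (m + 1) → ℝ :=
  (rad m p x)⁻¹ • xqpart m p x

/-- The reflection `x = x_p + x_q ↦ x_⋄ = x_p - x_q`. -/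
def reflP (m p : ℕ) (x : Fin (m + 1) → ℝ) : Fin (m + 1) → ℝ := fun s =>
  if (s : ℕ) ≤ p then x s else -x s

/-- The sphere `𝕊 = {x_q ∈ span(v_{p+1},…,v_m) : x_q² = -1}`, in coordinates. -/
def Sph (v : ℕ → A) (m p : ℕ) : Set (Fin (m + 1) → ℝ) :=
  {w | (∀ s : Fin (m + 1), (s : ℕ) ≤ p → w s = 0) ∧ emb v m w * emb v m w = -1}

/-- The point `x_p + r ω` of `M ≅ ℝ^{m+1}`. -/
def pt (m p : ℕ) (w : Fin (m + 1) → ℝ) (y : Fin (p + 1) → ℝ) (r : ℝ) :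
    Fin (m + 1) → ℝ :=
  injP m p y + r • w

/-- The slice `Ω_ω ⊆ ℝ^{p+2}` of `Ω` at `ω`. -/
def sliceSet (m p : ℕ) (Ω : Set (Fin (m + 1) → ℝ)) (w : Fin (m + 1) → ℝ) :
    Set ((Fin (p + 1) → ℝ) × ℝ) := {z | pt m p w z.1 z.2 ∈ Ω}

/-- The restriction `f_ω` of `f` to the slice at `ω`, as a function on `ℝ^{p+2}`. -/
def sliceFun (m p : ℕ) (f : (Fin (m + 1) → ℝ) → A) (w : Fin (m + 1) → ℝ) :
    (Fin (p + 1) → ℝ) × ℝ → A := fun z => f (pt m p w z.1 z.2)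

/-- Partial derivative `∂_{x_s}` of a function on `ℝ^{m+1}`. -/
noncomputable def pdF (m : ℕ) (s : Fin (m + 1)) (f : (Fin (m + 1) → ℝ) → A)
    (x : Fin (m + 1) → ℝ) : A := fderiv ℝ f x (Pi.single s 1)

/-- Partial derivative `∂_{x_s}` of a function on `ℝ^{p+1}`. -/
noncomputable def pdP (p : ℕ) (s : Fin (p + 1)) (g : (Fin (p + 1) → ℝ) → A)
    (y : Fin (p + 1) → ℝ) : A := fderiv ℝ g y (Pi.single s 1)

/-- Partial derivative `∂_{x_s}` of a function on `ℝ^{p+2} = ℝ^{p+1} × ℝ`. -/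
noncomputable def pdSx (p : ℕ) (s : Fin (p + 1)) (G : (Fin (p + 1) → ℝ) × ℝ → A)
    (z : (Fin (p + 1) → ℝ) × ℝ) : A := fderiv ℝ G z (Pi.single s 1, 0)

/-- Partial derivative `∂_r` of a function on `ℝ^{p+2} = ℝ^{p+1} × ℝ`. -/
noncomputable def pdSr (p : ℕ) (G : (Fin (p + 1) → ℝ) × ℝ → A)
    (z : (Fin (p + 1) → ℝ) × ℝ) : A := fderiv ℝ G z (0, 1)

/-- Second partial derivative `∂_r²`. -/
noncomputable def pdSr2 (p : ℕ) (G : (Fin (p + 1) → ℝ) × ℝ → A)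
    (z : (Fin (p + 1) → ℝ) × ℝ) : A := pdSr p (pdSr p G) z

/-- The operator `Σ_{lo ≤ s ≤ hi} v_s ∂_{x_s}` on functions on `ℝ^{m+1}`.
`Dop v m 0 p` is `D_{x_p}`, `Dop v m (p+1) m` is `D_{x_q}`, `Dop v m 0 m` is `D_x`. -/
noncomputable def Dop (v : ℕ → A) (m lo hi : ℕ) (f : (Fin (m + 1) → ℝ) → A)
    (x : Fin (m + 1) → ℝ) : A :=
  ∑ s : Fin (m + 1), if lo ≤ (s : ℕ) ∧ (s : ℕ) ≤ hi then v (s : ℕ) * pdF m s f x else 0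

/-- The conjugate operator `∂_{x_0} - Σ_{1 ≤ s ≤ hi} v_s ∂_{x_s}` on functions on
`ℝ^{m+1}`; `Dbarop v m p` is `D̄_{x_p}`, `Dbarop v m m` is `D̄_x`. -/
noncomputable def Dbarop (v : ℕ → A) (m hi : ℕ) (f : (Fin (m + 1) → ℝ) → A)
    (x : Fin (m + 1) → ℝ) : A :=
  pdF m 0 f x -
    ∑ s : Fin (m + 1), if 1 ≤ (s : ℕ) ∧ (s : ℕ) ≤ hi then v (s : ℕ) * pdF m s f x else 0

/-- The operator `D_{x_p} = Σ_{s=0}^p v_s ∂_{x_s}` on functions on `ℝ^{p+1}`. -/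
noncomputable def DopP (v : ℕ → A) (p : ℕ) (g : (Fin (p + 1) → ℝ) → A)
    (y : Fin (p + 1) → ℝ) : A :=
  ∑ s : Fin (p + 1), v (s : ℕ) * pdP p s g y

/-- The operator `D̄_{x_p} = ∂_{x_0} - Σ_{s=1}^p v_s ∂_{x_s}` on functions on `ℝ^{p+1}`. -/
noncomputable def DbaropP (v : ℕ → A) (p : ℕ) (g : (Fin (p + 1) → ℝ) → A)
    (y : Fin (p + 1) → ℝ) : A :=
  pdP p 0 g y - ∑ s : Fin (p + 1), if 1 ≤ (s : ℕ) then v (s : ℕ) * pdP p s g y else 0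

/-- The operator `D_{x_p}` on functions on `ℝ^{p+2} = ℝ^{p+1} × ℝ`. -/
noncomputable def DopSx (v : ℕ → A) (p : ℕ) (G : (Fin (p + 1) → ℝ) × ℝ → A)
    (z : (Fin (p + 1) → ℝ) × ℝ) : A :=
  ∑ s : Fin (p + 1), v (s : ℕ) * pdSx p s G z

/-- The operator `D̄_{x_p}` on functions on `ℝ^{p+2} = ℝ^{p+1} × ℝ`. -/
noncomputable def DbaropSx (v : ℕ → A) (p : ℕ) (G : (Fin (p + 1) → ℝ) × ℝ → A)
    (z : (Fin (p + 1) → ℝ) × ℝ) : A :=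
  pdSx p 0 G z - ∑ s : Fin (p + 1), if 1 ≤ (s : ℕ) then v (s : ℕ) * pdSx p s G z else 0

/-- The Laplacian `Δ_x` on functions on `ℝ^{m+1}`. -/
noncomputable def lapF (m : ℕ) (f : (Fin (m + 1) → ℝ) → A)
    (x : Fin (m + 1) → ℝ) : A :=
  ∑ s : Fin (m + 1), pdF m s (pdF m s f) x

/-- The Laplacian `Δ_{x_p}` on functions on `ℝ^{p+1}`. -/
noncomputable def lapP (p : ℕ) (g : (Fin (p + 1) → ℝ) → A)
    (y : Fin (p + 1) → ℝ) : A :=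
  ∑ s : Fin (p + 1), pdP p s (pdP p s g) y

/-- Iterated Laplacian `Δ_x^k`. -/
noncomputable def lapIterF (m k : ℕ) (f : (Fin (m + 1) → ℝ) → A) :
    (Fin (m + 1) → ℝ) → A :=
  (fun g => lapF m g)^[k] f

/-- Iterated Laplacian `Δ_{x_p}^k`. -/
noncomputable def lapIterP (p k : ℕ) (g : (Fin (p + 1) → ℝ) → A) :
    (Fin (p + 1) → ℝ) → A :=
  (fun h => lapP p h)^[k] g

/-- The Laplacian `Δ_{x'} = Δ_{x_p} + ∂_r²` on functions on `ℝ^{p+2}`. -/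
noncomputable def lapSx (p : ℕ) (G : (Fin (p + 1) → ℝ) × ℝ → A)
    (z : (Fin (p + 1) → ℝ) × ℝ) : A :=
  (∑ s : Fin (p + 1), pdSx p s (pdSx p s G) z) + pdSr2 p G z

/-- The slice Cauchy-Riemann operator `D_ω = D_{x_p} + ω ∂_r` applied to a function
on `ℝ^{p+2}`, where `ω` is given in coordinates by `w`. -/
noncomputable def DomCR (v : ℕ → A) (m p : ℕ) (w : Fin (m + 1) → ℝ)
    (G : (Fin (p + 1) → ℝ) × ℝ → A) (z : (Fin (p + 1) → ℝ) × ℝ) : A :=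
  DopSx v p G z + emb v m w * pdSr p G z

/-- `f` is left generalized partial-slice monogenic (of type `(p, m-p)`) on `Ω`. -/
def GSM (v : ℕ → A) (m p : ℕ) (f : (Fin (m + 1) → ℝ) → A)
    (Ω : Set (Fin (m + 1) → ℝ)) : Prop :=
  ∀ w ∈ Sph v m p, ContDiffOn ℝ 1 (sliceFun m p f w) (sliceSet m p Ω w) ∧
    ∀ z ∈ sliceSet m p Ω w, DomCR v m p w (sliceFun m p f w) z = 0

/-- `Ω` is partially symmetric with respect to `ℝ^{p+1}`. -/
def PSym (v : ℕ → A) (m p : ℕ) (Ω : Set (Fin (m + 1) → ℝ)) : Prop :=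
  ∀ x ∈ Ω, ∀ w ∈ Sph v m p, xppart m p x + rad m p x • w ∈ Ω

/-- `Ω` is a slice domain: a domain meeting `ℝ^{p+1}` all of whose slices are
domains in `ℝ^{p+2}`. -/
def SliceDomain (v : ℕ → A) (m p : ℕ) (Ω : Set (Fin (m + 1) → ℝ)) : Prop :=
  IsOpen Ω ∧ IsConnected Ω ∧ (∃ x ∈ Ω, xqpart m p x = 0) ∧
    ∀ w ∈ Sph v m p, IsConnected (sliceSet m p Ω w)

/-- The reflection `(x_p, r) ↦ (x_p, -r)` of `ℝ^{p+2}`. -/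
def reflD (p : ℕ) (z : (Fin (p + 1) → ℝ) × ℝ) : (Fin (p + 1) → ℝ) × ℝ := (z.1, -z.2)

/-- The p-symmetric completion `Ω_D ⊆ M` of `D ⊆ ℝ^{p+2}`. -/
def OmegaD (v : ℕ → A) (m p : ℕ) (D : Set ((Fin (p + 1) → ℝ) × ℝ)) :
    Set (Fin (m + 1) → ℝ) :=
  {x | ∃ w ∈ Sph v m p, ∃ z ∈ D, x = pt m p w z.1 z.2}

/-- `(F₁, F₂)` satisfies the even-odd (stem function) conditions on `D`. -/
def IsStem (p : ℕ) (D : Set ((Fin (p + 1) → ℝ) × ℝ))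
    (F₁ F₂ : (Fin (p + 1) → ℝ) × ℝ → A) : Prop :=
  ∀ z ∈ D, F₁ (reflD p z) = F₁ z ∧ F₂ (reflD p z) = -F₂ z

/-- `f` is the generalized partial-slice function induced by the stem `(F₁, F₂)`:
`f(x_p + rω) = F₁(x_p, r) + ω F₂(x_p, r)`. -/
def Induced (v : ℕ → A) (m p : ℕ) (D : Set ((Fin (p + 1) → ℝ) × ℝ))
    (F₁ F₂ : (Fin (p + 1) → ℝ) × ℝ → A) (f : (Fin (m + 1) → ℝ) → A) : Prop :=
  ∀ w ∈ Sph v m p, ∀ z ∈ D, f (pt m p w z.1 z.2) = F₁ z + emb v m w * F₂ z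

/-- The generalized Cauchy-Riemann system for the stem `(F₁, F₂)` on `D`. -/
def StemCR (v : ℕ → A) (p : ℕ) (D : Set ((Fin (p + 1) → ℝ) × ℝ))
    (F₁ F₂ : (Fin (p + 1) → ℝ) × ℝ → A) : Prop :=
  ∀ z ∈ D, DopSx v p F₁ z - pdSr p F₂ z = 0 ∧ DbaropSx v p F₂ z + pdSr p F₁ z = 0

/-- `f` is generalized partial-slice regular on `Ω_D`. -/
def MemGSR (v : ℕ → A) (m p : ℕ) (D : Set ((Fin (p + 1) → ℝ) × ℝ))
    (f : (Fin (m + 1) → ℝ) → A) : Prop :=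
  ∃ F₁ F₂ : (Fin (p + 1) → ℝ) × ℝ → A, IsStem p D F₁ F₂ ∧
    ContDiffOn ℝ 1 F₁ D ∧ ContDiffOn ℝ 1 F₂ D ∧
    Induced v m p D F₁ F₂ f ∧ StemCR v p D F₁ F₂

/-- `f` is a generalized partial-slice function on `Ω`. -/
def MemGS (v : ℕ → A) (m p : ℕ) (Ω : Set (Fin (m + 1) → ℝ))
    (f : (Fin (m + 1) → ℝ) → A) : Prop :=
  ∃ F₁ F₂ : (Fin (p + 1) → ℝ) × ℝ → A,
    (∀ z : (Fin (p + 1) → ℝ) × ℝ, F₁ (reflD p z) = F₁ z ∧ F₂ (reflD p z) = -F₂ z) ∧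
    ∀ x ∈ Ω, f x = F₁ (projP m p x, rad m p x) +
      emb v m (normq m p x) * F₂ (projP m p x, rad m p x)

/-- Non-associative power: `a^n` with products taken from the right. -/
def apow (a : A) (n : ℕ) : A := (fun b => a * b)^[n] 1

/-- Partial even part `PE[f](x) = (f(x) + f(x_⋄))/2`. -/
noncomputable def PE (m p : ℕ) (f : (Fin (m + 1) → ℝ) → A)
    (x : Fin (m + 1) → ℝ) : A := (2 : ℝ)⁻¹ • (f x + f (reflP m p x))

/-- Partial odd part `PO[f](x) = (f(x) - f(x_⋄))/2`. -/
noncomputable def PO (m p : ℕ) (f : (Fin (m + 1) → ℝ) → A)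
    (x : Fin (m + 1) → ℝ) : A := (2 : ℝ)⁻¹ • (f x - f (reflP m p x))

/-- `Ω₀* = {x_p + x_q : x_p ∈ Ω₀, x_q ∈ ℝ^q}`. -/
def Omega0star (m p : ℕ) (Ω₀ : Set (Fin (p + 1) → ℝ)) : Set (Fin (m + 1) → ℝ) :=
  {x | projP m p x ∈ Ω₀}

/-- The spherical derivative `f'_s(x) = (1/2) x_q⁻¹ (f(x) - f(x_⋄))`
(using `x_q⁻¹ = -x_q/|x_q|²`). -/
noncomputable def sder (v : ℕ → A) (m p : ℕ) (f : (Fin (m + 1) → ℝ) → A)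
    (x : Fin (m + 1) → ℝ) : A :=
  -(((2 : ℝ) * rad m p x ^ 2)⁻¹) • (emb v m (xqpart m p x) * (f x - f (reflP m p x)))

/-- The spherical Dirac operator
`Γ f = -(1/2) Σ_{p+1 ≤ i,j ≤ m} v_i (v_j (L_{ij} f))`. -/
noncomputable def sphericalGamma (v : ℕ → A) (m p : ℕ) (f : (Fin (m + 1) → ℝ) → A)
    (x : Fin (m + 1) → ℝ) : A :=
  -((2 : ℝ)⁻¹) • ∑ i : Fin (m + 1), ∑ j : Fin (m + 1),
    if p < (i : ℕ) ∧ p < (j : ℕ) then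
      v (i : ℕ) * (v (j : ℕ) * (x i • pdF m j f x - x j • pdF m i f x)) else 0

/-- The slice Cauchy-Riemann operator `D_ω` applied to (the slice restriction of) a
function `f` on `M`, at the point `x` (with `ω = x_q/|x_q|`). -/
noncomputable def DomCRat (v : ℕ → A) (m p : ℕ) (f : (Fin (m + 1) → ℝ) → A)
    (x : Fin (m + 1) → ℝ) : A :=
  DomCR v m p (normq m p x) (sliceFun m p f (normq m p x)) (projP m p x, rad m p x)

/-- `f` is left monogenic on `Ω`: `f ∈ C¹` and `D_x f = 0`. -/
def Monogenic (v : ℕ → A) (m : ℕ) (f : (Fin (m + 1) → ℝ) → A)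
    (Ω : Set (Fin (m + 1) → ℝ)) : Prop :=
  ContDiffOn ℝ 1 f Ω ∧ ∀ x ∈ Ω, Dop v m 0 m f x = 0

/-- `f` is harmonic on `Ω`: `f ∈ C²` and `Δ_x f = 0`. -/
def Harmonic (m : ℕ) (f : (Fin (m + 1) → ℝ) → A)
    (Ω : Set (Fin (m + 1) → ℝ)) : Prop :=
  ContDiffOn ℝ 2 f Ω ∧ ∀ x ∈ Ω, lapF m f x = 0

/-- A family of functions converges normally (locally a summable uniform bound). -/
def NormallyConvOn {E F : Type*} [TopologicalSpace E] [NormedAddCommGroup F]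
    (u : ℕ → E → F) (s : Set E) : Prop :=
  ∀ x ∈ s, ∃ U ∈ nhds x, ∃ c : ℕ → ℝ, Summable c ∧ ∀ k : ℕ, ∀ y ∈ U, ‖u k y‖ ≤ c k

/-- The generalized partial-slice CK-extension
`CK[f₀](x) = Σ_k (r^{2k}/(2k)!)(-Δ_{x_p})^k f₀(x_p)
  + ω Σ_k (r^{2k+1}/(2k+1)!)(-Δ_{x_p})^k (D_{x_p} f₀)(x_p)`. -/
noncomputable def CKe (v : ℕ → A) (m p : ℕ) (f₀ : (Fin (p + 1) → ℝ) → A)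
    (x : Fin (m + 1) → ℝ) : A :=
  (∑' k : ℕ, (((-1 : ℝ) ^ k * rad m p x ^ (2 * k)) / (2 * k).factorial) •
      lapIterP p k f₀ (projP m p x)) +
  emb v m (normq m p x) *
    ∑' k : ℕ, (((-1 : ℝ) ^ k * rad m p x ^ (2 * k + 1)) / (2 * k + 1).factorial) •
      lapIterP p k (DopP v p f₀) (projP m p x)

/-- The coefficient `Γ(q/2)(-1)^k r^{2k} / (2^{2k} k! Γ(k + q/2))`. -/
noncomputable def hgckC (q k : ℕ) (r : ℝ) : ℝ :=
  (Real.Gamma ((q : ℝ) / 2) * (-1) ^ k * r ^ (2 * k)) /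
    (2 ^ (2 * k) * (k.factorial : ℝ) * Real.Gamma ((k : ℝ) + (q : ℝ) / 2))

/-- The coefficient `Γ(q/2)(-1)^k r^{2k} / (2^{2k+1} k! Γ(k + q/2 + 1))`. -/
noncomputable def gckC' (q k : ℕ) (r : ℝ) : ℝ :=
  (Real.Gamma ((q : ℝ) / 2) * (-1) ^ k * r ^ (2 * k)) /
    (2 ^ (2 * k + 1) * (k.factorial : ℝ) * Real.Gamma ((k : ℝ) + (q : ℝ) / 2 + 1))

/-- The coefficient `Γ(q/2 + 1)(-1)^k r^{2k} / (2^{2k} k! Γ(k + q/2 + 1))`. -/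
noncomputable def hgckC' (q k : ℕ) (r : ℝ) : ℝ :=
  (Real.Gamma ((q : ℝ) / 2 + 1) * (-1) ^ k * r ^ (2 * k)) /
    (2 ^ (2 * k) * (k.factorial : ℝ) * Real.Gamma ((k : ℝ) + (q : ℝ) / 2 + 1))

/-- The monogenic generalized CK-extension `GCK[A₀]`. -/
noncomputable def GCKe (v : ℕ → A) (m p : ℕ) (A₀ : (Fin (p + 1) → ℝ) → A)
    (x : Fin (m + 1) → ℝ) : A :=
  (∑' k : ℕ, hgckC (m - p) k (rad m p x) • lapIterP p k A₀ (projP m p x)) +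
  emb v m (xqpart m p x) *
    ∑' k : ℕ, gckC' (m - p) k (rad m p x) • lapIterP p k (DopP v p A₀) (projP m p x)

/-- The harmonic generalized CK-extension `HGCK[A₀, A₁]`. -/
noncomputable def HGCKe (v : ℕ → A) (m p : ℕ) (A₀ A₁ : (Fin (p + 1) → ℝ) → A)
    (x : Fin (m + 1) → ℝ) : A :=
  (∑' k : ℕ, hgckC (m - p) k (rad m p x) • lapIterP p k A₀ (projP m p x)) +
  emb v m (xqpart m p x) *
    ∑' k : ℕ, hgckC' (m - p) k (rad m p x) • lapIterP p k A₁ (projP m p x)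

/-- The operator `(1/r)∂_r`, extended to `r = 0` by its limit `∂_r²` (on even
functions). -/
noncomputable def T1 (p : ℕ) (G : (Fin (p + 1) → ℝ) × ℝ → A) :
    (Fin (p + 1) → ℝ) × ℝ → A := fun z =>
  if z.2 = 0 then pdSr2 p G z else (z.2)⁻¹ • pdSr p G z

/-- The operator `∂_r ∘ (1/r)`, extended to `r = 0` by its limit `(1/2)∂_r²` (on odd
functions). -/
noncomputable def T2 (p : ℕ) (G : (Fin (p + 1) → ℝ) × ℝ → A) :
    (Fin (p + 1) → ℝ) × ℝ → A := fun z =>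
  if z.2 = 0 then (2 : ℝ)⁻¹ • pdSr2 p G z
  else fderiv ℝ (fun t : ℝ => t⁻¹ • G (z.1, t)) z.2 1

/-- `C_q(k) = (q-1)(q-3)⋯(q-2k+1)`, `C_q(0) = 1`. -/
noncomputable def cq (q k : ℕ) : ℝ :=
  ∏ i ∈ Finset.range k, ((q : ℝ) - (2 * (i : ℝ) + 1))

/-- Double factorial. -/
def dfac : ℕ → ℕ
  | 0 => 1
  | 1 => 1
  | n + 2 => (n + 2) * dfac n

/-- The Fueter-Sce constant `γ_q = (-1)^{(q-1)/2} (q-1)!!/(q-2)!!`. -/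
noncomputable def gammaQ (q : ℕ) : ℝ :=
  (-1 : ℝ) ^ ((q - 1) / 2) * (dfac (q - 1) : ℝ) / (dfac (q - 2) : ℝ)

/-! Write `F₂ = r G` (Hadamard's lemma), so that `f = F₁ + x_q G` with `F₁` and `G` even in `r`, and
put `T₁ = (1/r) ∂_r`. The generalized Cauchy-Riemann system becomes the case `c = 1` of the Vekua
type system `D_{x_p} E = c G + r² T₁ G`, `D̄_{x_p} G = -T₁ E`. For a solution `(E, G)` the function
`h = E + x_q G` satisfies `D_x h = (c - q) G` and `D̄_x G = -(T₁ E + x_q T₁ G)`, hence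
`Δ_x h = D̄_x D_x h = (q - c) (T₁ E + x_q T₁ G)`; moreover `(T₁ E, T₁ G)` solves the system with
`c + 2` in place of `c`. After `(q - 1) / 2` Laplacians `c = q`, where `h` is monogenic.

A `C¹` solution of the Cauchy-Riemann system is weakly harmonic, because the system factors the
Laplacian; averaging it against a radial mollifier leaves it unchanged, so it is smooth. -/

/-! ### Localization -/

section Localization
variable {W V : Type*} [NormedAddCommGroup W] [NormedSpace ℝ W]
  [NormedAddCommGroup V] [NormedSpace ℝ V]

lemma contDiff_of_contDiffAt_tsupport {n : WithTop ℕ∞} {f : W → V}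
    (h : ∀ x ∈ tsupport f, ContDiffAt ℝ n f x) : ContDiff ℝ n f := by
  refine contDiff_iff_contDiffAt.2 fun x => ?_
  by_cases hx : x ∈ tsupport f
  · exact h x hx
  · exact contDiffAt_const.congr_of_eventuallyEq (notMem_tsupport_iff_eventuallyEq.mp hx)

lemma exists_contDiff_hasCompactSupport_eventuallyEq [FiniteDimensional ℝ W] {n : ℕ∞}
    {D : Set W} (hD : IsOpen D) {u : W → V} (hu : ContDiffOn ℝ n u D) {z : W} (hz : z ∈ D) :
    ∃ U : W → V, ContDiff ℝ n U ∧ HasCompactSupport U ∧ U =ᶠ[𝓝 z] u := by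
  obtain ⟨R, hR, hRD⟩ := Metric.nhds_basis_closedBall.mem_iff.1 (hD.mem_nhds hz)
  let χ : ContDiffBump z := ⟨R / 2, R, half_pos hR, half_lt_self hR⟩
  refine ⟨fun x => χ x • u x, contDiff_of_contDiffAt_tsupport fun x hx => ?_,
    χ.hasCompactSupport.smul_right, ?_⟩
  · have hxD : x ∈ D := hRD (χ.tsupport_eq ▸ tsupport_smul_subset_left χ u hx)
    exact χ.contDiffAt.smul (hu.contDiffAt (hD.mem_nhds hxD))
  · filter_upwards [χ.eventuallyEq_one] with x hx
    simp [hx]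

end Localization

/-! ### Elliptic regularity for Dirac systems -/

section Dirac
open MeasureTheory
open scoped ContDiff RealInnerProductSpace

/-- Constant coefficients `E`, `E'` for which the first order operators `E(∂) = ∑ E j ∂_j` and
`E'(∂) = ∑ E' i ∂_i` factor the Laplacian as `Δ = E'(∂) E(∂)`. -/
structure IsDiracPair {ι V : Type*} [DecidableEq ι] [NormedAddCommGroup V] [NormedSpace ℝ V]
    (E E' : ι → V →L[ℝ] V) : Prop where
  add_comp : ∀ i j x, E' i (E j x) + E' j (E i x) = if i = j then (2 : ℝ) • x else 0

lemma IsDiracPair.sum_sum_apply_of_symm {ι V : Type*} [Fintype ι] [DecidableEq ι]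
    [NormedAddCommGroup V] [NormedSpace ℝ V] {E E' : ι → V →L[ℝ] V} (h : IsDiracPair E E')
    {B : ι → ι → V} (hB : ∀ i j, B i j = B j i) :
    ∑ i, ∑ j, E' i (E j (B i j)) = ∑ i, B i i := by
  have hswap : ∑ i, ∑ j, E' i (E j (B i j)) = ∑ i, ∑ j, E' j (E i (B i j)) := by
    rw [Finset.sum_comm]
    simp only [hB]
  refine smul_right_injective V (two_ne_zero' ℝ) ?_
  calc (2 : ℝ) • ∑ i, ∑ j, E' i (E j (B i j))
      = ∑ i, ∑ j, (E' i (E j (B i j)) + E' j (E i (B i j))) := by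
        rw [two_smul]
        nth_rewrite 2 [hswap]
        simp only [Finset.sum_add_distrib]
    _ = (2 : ℝ) • ∑ i, B i i := by
        simp [h.add_comp, Finset.smul_sum]

section Weak
variable {W V : Type*} [NormedAddCommGroup W] [NormedSpace ℝ W] [MeasurableSpace W] [BorelSpace W]
  {μ : Measure W} [μ.IsAddHaarMeasure]
  [NormedAddCommGroup V] [NormedSpace ℝ V]
  {η : W → ℝ} {U : W → V}

lemma integrable_fderiv_smul_fderiv (hη : ContDiff ℝ 1 η) (hc : HasCompactSupport η)
    (hU : ContDiff ℝ 1 U) (a b : W) :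
    Integrable (fun x => fderiv ℝ η x a • fderiv ℝ U x b) μ :=
  (((hη.continuous_fderiv one_ne_zero).clm_apply continuous_const).smul
    ((hU.continuous_fderiv one_ne_zero).clm_apply
      continuous_const)).integrable_of_hasCompactSupport
    (HasCompactSupport.smul_right (hc.fderiv_apply (𝕜 := ℝ) a))

variable [FiniteDimensional ℝ W]

lemma integral_fderiv_smul_fderiv_comm (hη : ContDiff ℝ 2 η) (hc : HasCompactSupport η)
    (hU : ContDiff ℝ 1 U) (a b : W) :
    ∫ x, fderiv ℝ η x a • fderiv ℝ U x b ∂μ = ∫ x, fderiv ℝ η x b • fderiv ℝ U x a ∂μ := by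
  have hη' : ContDiff ℝ 1 (fderiv ℝ η) := hη.fderiv_right (by norm_num)
  have hηc (c : W) : ContDiff ℝ 1 (fun x => fderiv ℝ η x c) := hη'.clm_apply contDiff_const
  have hcc (c : W) : HasCompactSupport (fun x => fderiv ℝ η x c) := hc.fderiv_apply (𝕜 := ℝ) c
  have by_parts (a b : W) : ∫ x, fderiv ℝ η x a • fderiv ℝ U x b ∂μ =
      -∫ x, fderiv ℝ (fun x => fderiv ℝ η x a) x b • U x ∂μ := by
    refine integral_smul_fderiv_eq_neg_fderiv_smul_of_integrable ?_
      (integrable_fderiv_smul_fderiv (hη.of_le one_le_two) hc hU a b) ?_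
      (fun x _ => (hηc a).differentiable one_ne_zero x)
      (fun x _ => hU.differentiable one_ne_zero x)
    · exact ((((hηc a).continuous_fderiv one_ne_zero).clm_apply continuous_const).smul
        hU.continuous).integrable_of_hasCompactSupport
        (HasCompactSupport.smul_right ((hcc a).fderiv_apply (𝕜 := ℝ) b))
    · exact ((hηc a).continuous.smul hU.continuous).integrable_of_hasCompactSupport
        (HasCompactSupport.smul_right (hcc a))
  have second (x a b : W) : fderiv ℝ (fun x => fderiv ℝ η x a) x b
      = fderiv ℝ (fderiv ℝ η) x b a := by
    simp [fderiv_clm_apply (hη'.differentiable one_ne_zero x) (differentiableAt_const a)]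
  have schwarz (x : W) : fderiv ℝ (fderiv ℝ η) x b a = fderiv ℝ (fderiv ℝ η) x a b :=
    (hη.contDiffAt.isSymmSndFDerivAt (by simp)).eq b a
  simp only [by_parts, second, schwarz]

lemma sum_integral_fderiv_smul_fderiv_eq_zero [FiniteDimensional ℝ V]
    {ι : Type*} [Fintype ι] [DecidableEq ι] (e : ι → W) {E E' : ι → V →L[ℝ] V}
    (hE : IsDiracPair E E') (hη : ContDiff ℝ 2 η) (hc : HasCompactSupport η)
    (hU : ContDiff ℝ 1 U) (hD : ∀ x ∈ tsupport η, ∑ j, E j (fderiv ℝ U x (e j)) = 0) :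
    ∑ i, ∫ x, fderiv ℝ η x (e i) • fderiv ℝ U x (e i) ∂μ = 0 := by
  have : CompleteSpace V := FiniteDimensional.complete ℝ V
  set S : ι → ι → V := fun i j => ∫ x, fderiv ℝ η x (e i) • fderiv ℝ U x (e j) ∂μ
  have S_symm (i j : ι) : S i j = S j i := integral_fderiv_smul_fderiv_comm hη hc hU _ _
  have hInt (i j : ι) : Integrable (fun x => fderiv ℝ η x (e i) • fderiv ℝ U x (e j)) μ :=
    integrable_fderiv_smul_fderiv (hη.of_le one_le_two) hc hU _ _
  have weak_dirac (i : ι) : ∑ j, E j (S i j) = 0 := by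
    have hEint (j : ι) : E j (S i j) = ∫ x, E j (fderiv ℝ η x (e i) • fderiv ℝ U x (e j)) ∂μ :=
      ((E j).integral_comp_comm (hInt i j)).symm
    simp_rw [hEint]
    rw [← integral_finsetSum _ fun j _ => (E j).integrable_comp (hInt i j)]
    refine integral_eq_zero_of_ae (Eventually.of_forall fun x => ?_)
    simp only [map_smul, ← Finset.smul_sum, Pi.zero_apply]
    by_cases hx : x ∈ tsupport η
    · rw [hD x hx, smul_zero]
    · rw [show fderiv ℝ η x = 0 from
        Function.notMem_support.1 fun h => hx (support_fderiv_subset ℝ h)]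
      simp
  calc ∑ i, S i i = ∑ i, ∑ j, E' i (E j (S i j)) := (hE.sum_sum_apply_of_symm S_symm).symm
    _ = 0 := Finset.sum_eq_zero fun i _ => by rw [← map_sum, weak_dirac, map_zero]

end Weak

lemma exists_primitive_eq_zero_of_le {h : ℝ → ℝ} (hh : ContDiff ℝ 1 h) {c : ℝ}
    (hc : ∀ s, c ≤ s → h s = 0) :
    ∃ H : ℝ → ℝ, ContDiff ℝ 2 H ∧ (∀ s, HasDerivAt H (h s) s) ∧ ∀ s, c ≤ s → H s = 0 := by
  have hd (s : ℝ) : HasDerivAt (fun s => ∫ t in c..s, h t) (h s) s :=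
    intervalIntegral.integral_hasDerivAt_right (hh.continuous.intervalIntegrable _ _)
      (hh.continuous.stronglyMeasurableAtFilter _ _) hh.continuous.continuousAt
  refine ⟨fun s => ∫ t in c..s, h t, ?_, hd, fun s hs => ?_⟩
  · have hderiv : deriv (fun s => ∫ t in c..s, h t) = h := funext fun s => (hd s).deriv
    rw [show (2 : WithTop ℕ∞) = 1 + 1 by norm_num, contDiff_succ_iff_deriv, hderiv]
    exact ⟨fun s => (hd s).differentiableAt, by simp, hh⟩
  · refine intervalIntegral.integral_zero_ae (Eventually.of_forall fun t ht => hc t ?_)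
    exact (Set.uIoc_of_le hs ▸ ht).1.le

section Radial
variable {W V : Type*} [NormedAddCommGroup W] {h : ℝ → ℝ} {ε : ℝ}

lemma tsupport_comp_norm_sq_subset (hε : 0 ≤ ε) (h0 : ∀ s, ε ^ 2 ≤ s → h s = 0) :
    tsupport (fun y : W => h (‖y‖ ^ 2)) ⊆ Metric.closedBall 0 ε := by
  refine closure_minimal (fun y hy => ?_) Metric.isClosed_closedBall
  rw [mem_closedBall_zero_iff]
  by_contra! hlt
  exact hy (h0 _ (pow_le_pow_left₀ hε hlt.le 2))

variable [InnerProductSpace ℝ W]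

lemma hasCompactSupport_comp_norm_sq [FiniteDimensional ℝ W] (hε : 0 ≤ ε)
    (h0 : ∀ s, ε ^ 2 ≤ s → h s = 0) : HasCompactSupport (fun y : W => h (‖y‖ ^ 2)) :=
  (isCompact_closedBall 0 ε).of_isClosed_subset (isClosed_tsupport _)
    (tsupport_comp_norm_sq_subset hε h0)

lemma fderiv_comp_norm_sq {H : ℝ → ℝ} (hH : ∀ s, HasDerivAt H (h s) s) (y w : W) :
    fderiv ℝ (fun y : W => H (‖y‖ ^ 2)) y w = 2 * (h (‖y‖ ^ 2) * ⟪y, w⟫) := by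
  have hd : HasFDerivAt (fun y : W => H (‖y‖ ^ 2)) (h (‖y‖ ^ 2) • 2 • innerSL ℝ y) y :=
    (hH _).comp_hasFDerivAt y (hasStrictFDerivAt_norm_sq y).hasFDerivAt
  rw [hd.fderiv]
  simp only [smul_apply, innerSL_apply_apply, smul_eq_mul, nsmul_eq_mul, Nat.cast_ofNat]
  ring

variable [FiniteDimensional ℝ W] [MeasurableSpace W] [BorelSpace W]
  [NormedAddCommGroup V] [NormedSpace ℝ V] {U : W → V}
  {ι : Type*} [Fintype ι] [DecidableEq ι] {b : OrthonormalBasis ι ℝ W} {E E' : ι → V →L[ℝ] V}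

lemma integral_comp_norm_sq_smul_fderiv_self_eq_zero [FiniteDimensional ℝ V]
    (hE : IsDiracPair E E') (hh : ContDiff ℝ 1 h) (hε : 0 ≤ ε) (h0 : ∀ s, ε ^ 2 ≤ s → h s = 0)
    (hU : ContDiff ℝ 1 U)
    (hD : ∀ y ∈ Metric.closedBall 0 ε, ∑ j, E j (fderiv ℝ U y (b j)) = 0) :
    ∫ y, h (‖y‖ ^ 2) • fderiv ℝ U y y = 0 := by
  obtain ⟨H, hH2, hHd, hH0⟩ := exists_primitive_eq_zero_of_le hh h0
  have hη : ContDiff ℝ 2 (fun y : W => H (‖y‖ ^ 2)) := hH2.comp (contDiff_norm_sq ℝ)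
  have hηc : HasCompactSupport (fun y : W => H (‖y‖ ^ 2)) := hasCompactSupport_comp_norm_sq hε hH0
  have weak := sum_integral_fderiv_smul_fderiv_eq_zero (μ := volume) b hE hη hηc hU fun y hy =>
    hD y (tsupport_comp_norm_sq_subset hε hH0 hy)
  rw [← integral_finsetSum _ fun i _ =>
    integrable_fderiv_smul_fderiv (hη.of_le one_le_two) hηc hU _ _] at weak
  have radial (y : W) : ∑ i, fderiv ℝ (fun y : W => H (‖y‖ ^ 2)) y (b i) • fderiv ℝ U y (b i)
      = (2 : ℝ) • h (‖y‖ ^ 2) • fderiv ℝ U y y := by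
    simp_rw [fderiv_comp_norm_sq hHd, mul_smul, ← Finset.smul_sum, ← map_smul,
      real_inner_comm (b _) y]
    rw [← map_sum, b.sum_repr' y, map_smul, map_smul]
  simp_rw [radial, integral_smul] at weak
  exact (smul_eq_zero.1 weak).resolve_left two_ne_zero

lemma hasDerivAt_integral_smul_comp_smul {φ : W → ℝ} (hφ : Continuous φ)
    (hφc : HasCompactSupport φ) {μ : Measure W} [IsFiniteMeasureOnCompacts μ]
    (hU : ContDiff ℝ 1 U) {C : ℝ} (hC : ∀ x, ‖fderiv ℝ U x‖ ≤ C) (δ : ℝ) :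
    HasDerivAt (fun δ : ℝ => ∫ y, φ y • U (δ • y) ∂μ)
      (∫ y, φ y • fderiv ℝ U (δ • y) y ∂μ) δ := by
  have hdU : Continuous (fderiv ℝ U) := hU.continuous_fderiv one_ne_zero
  have hcont (δ : ℝ) : Continuous fun y => φ y • U (δ • y) :=
    hφ.smul (hU.continuous.comp (continuous_const_smul δ))
  refine (hasDerivAt_integral_of_dominated_loc_of_deriv_le
    (F := fun δ y => φ y • U (δ • y)) (F' := fun δ y => φ y • fderiv ℝ U (δ • y) y)
    (bound := fun y => ‖φ y‖ * (C * ‖y‖)) (s := Set.univ) Filter.univ_mem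
    (Eventually.of_forall fun δ => (hcont δ).aestronglyMeasurable)
    ((hcont δ).integrable_of_hasCompactSupport hφc.smul_right) ?_ ?_ ?_ ?_).2
  · exact (hφ.smul ((hdU.comp (continuous_const_smul δ)).clm_apply
      continuous_id)).aestronglyMeasurable
  · refine Eventually.of_forall fun y δ _ => ?_
    rw [norm_smul]
    gcongr
    exact (fderiv ℝ U _).le_of_opNorm_le (hC _) y
  · exact (hφ.norm.mul (continuous_const.mul continuous_norm)).integrable_of_hasCompactSupport
      hφc.norm.mul_right
  · refine Eventually.of_forall fun y δ _ => HasDerivAt.const_smul (φ y) ?_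
    have hline : HasDerivAt (fun δ : ℝ => δ • y) y δ := by
      simpa using (hasDerivAt_id δ).smul_const y
    exact (hU.differentiable one_ne_zero _).hasFDerivAt.comp_hasDerivAt δ hline

lemma integral_comp_norm_sq_smul_fderiv_smul_eq_zero [FiniteDimensional ℝ V]
    (hE : IsDiracPair E E') (hh : ContDiff ℝ 1 h) (hε : 0 ≤ ε) (h0 : ∀ s, ε ^ 2 ≤ s → h s = 0)
    (hU : ContDiff ℝ 1 U)
    (hD : ∀ y ∈ Metric.closedBall 0 ε, ∑ j, E j (fderiv ℝ U y (b j)) = 0)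
    {δ : ℝ} (hδ : δ ∈ Set.Ioo (0 : ℝ) 1) : ∫ y, h (‖y‖ ^ 2) • fderiv ℝ U (δ • y) y = 0 := by
  have hdil (y w : W) : fderiv ℝ (fun y => U (δ • y)) y w = δ • fderiv ℝ U (δ • y) w := by
    simp [fderiv_comp_smul]
  have hzero : ∫ y : W, h (‖y‖ ^ 2) • fderiv ℝ (fun y => U (δ • y)) y y = 0 := by
    refine integral_comp_norm_sq_smul_fderiv_self_eq_zero (b := b) hE hh hε h0
      (hU.comp (contDiff_const_smul δ)) fun y hy => ?_
    have hδy : δ • y ∈ Metric.closedBall 0 ε := by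
      rw [mem_closedBall_zero_iff] at hy ⊢
      rw [norm_smul, Real.norm_of_nonneg hδ.1.le]
      exact (mul_le_of_le_one_left (norm_nonneg y) hδ.2.le).trans hy
    simp only [hdil, map_smul, ← Finset.smul_sum, hD _ hδy, smul_zero]
  simp_rw [hdil, smul_comm _ δ, integral_smul] at hzero
  exact (smul_eq_zero.1 hzero).resolve_left hδ.1.ne'

lemma integral_comp_norm_sq_smul_eq [FiniteDimensional ℝ V] (hE : IsDiracPair E E')
    (hh : ContDiff ℝ 1 h) (hε : 0 ≤ ε) (h0 : ∀ s, ε ^ 2 ≤ s → h s = 0)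
    (hU : ContDiff ℝ 1 U) (hUc : HasCompactSupport U)
    (hD : ∀ y ∈ Metric.closedBall 0 ε, ∑ j, E j (fderiv ℝ U y (b j)) = 0) :
    ∫ y : W, h (‖y‖ ^ 2) • U y = (∫ y : W, h (‖y‖ ^ 2)) • U 0 := by
  have : CompleteSpace V := FiniteDimensional.complete ℝ V
  obtain ⟨C, hC⟩ : ∃ C, ∀ x, ‖fderiv ℝ U x‖ ≤ C :=
    (hUc.fderiv (𝕜 := ℝ)).exists_bound_of_continuous (hU.continuous_fderiv one_ne_zero)
  set M : ℝ → V := fun δ => ∫ y : W, h (‖y‖ ^ 2) • U (δ • y)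
  have hM (δ : ℝ) : HasDerivAt M (∫ y : W, h (‖y‖ ^ 2) • fderiv ℝ U (δ • y) y) δ :=
    hasDerivAt_integral_smul_comp_smul (hh.continuous.comp (by fun_prop))
      (hasCompactSupport_comp_norm_sq hε h0) hU hC δ
  have stationary (δ : ℝ) (hδ : δ ∈ Set.Ioo (0 : ℝ) 1) : HasDerivAt M 0 δ :=
    integral_comp_norm_sq_smul_fderiv_smul_eq_zero (b := b) hE hh hε h0 hU hD hδ ▸ hM δ
  have hM01 : M 1 = M 0 := by
    have hsub := intervalIntegral.integral_eq_sub_of_hasDerivAt_of_le zero_le_one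
      (fun δ _ => (hM δ).continuousAt.continuousWithinAt) stationary intervalIntegrable_const
    simpa [sub_eq_zero, eq_comm (a := (0 : V))] using hsub
  simpa [M, integral_smul_const] using hM01

lemma integral_comp_norm_sq_smul_sub_eq [FiniteDimensional ℝ V] (hE : IsDiracPair E E')
    (hh : ContDiff ℝ 1 h) (hε : 0 ≤ ε) (h0 : ∀ s, ε ^ 2 ≤ s → h s = 0)
    (hU : ContDiff ℝ 1 U) (hUc : HasCompactSupport U) {z : W}
    (hD : ∀ y ∈ Metric.closedBall z ε, ∑ j, E j (fderiv ℝ U y (b j)) = 0) :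
    ∫ y : W, h (‖y‖ ^ 2) • U (z - y) = (∫ y : W, h (‖y‖ ^ 2)) • U z := by
  have hderiv (y : W) : HasFDerivAt (fun y => U (z - y)) (-fderiv ℝ U (z - y)) y := by
    simpa [Function.comp_def] using (hU.differentiable one_ne_zero _).hasFDerivAt.comp y
      ((hasFDerivAt_id y).const_sub z)
  have hmean := integral_comp_norm_sq_smul_eq (b := b) (U := fun y => U (z - y)) hE hh hε h0
    (hU.comp (contDiff_const.sub contDiff_id)) (hUc.comp_homeomorph (Homeomorph.subLeft z))
    fun y hy => by simp [(hderiv y).fderiv, hD (z - y) (by simpa using hy)]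
  simpa using hmean

end Radial

end Dirac

section Regularity
open MeasureTheory
open scoped ContDiff
variable {V : Type*} [NormedAddCommGroup V] [NormedSpace ℝ V] [FiniteDimensional ℝ V]
  {ι : Type*} [Fintype ι] [DecidableEq ι] {E E' : ι → V →L[ℝ] V}

section InnerProduct
variable {W : Type*} [NormedAddCommGroup W] [InnerProductSpace ℝ W] [FiniteDimensional ℝ W]
  {b : OrthonormalBasis ι ℝ W}

lemma contDiffAt_of_isDiracPair (hE : IsDiracPair E E') {U : W → V} (hU : ContDiff ℝ 1 U)
    (hUc : HasCompactSupport U) {z₀ : W}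
    (hD : ∀ᶠ x in 𝓝 z₀, ∑ j, E j (fderiv ℝ U x (b j)) = 0) : ContDiffAt ℝ ∞ U z₀ := by
  borelize W
  obtain ⟨R, hR, hRD⟩ := Metric.eventually_nhds_iff_ball.1 hD
  set ε := R / 2 with hε
  have hε0 : 0 < ε := half_pos hR
  let h : ContDiffBump (0 : ℝ) := ⟨ε ^ 2 / 2, ε ^ 2, by positivity, half_lt_self (by positivity)⟩
  have h0 (s : ℝ) (hs : ε ^ 2 ≤ s) : h s = 0 :=
    h.zero_of_le_dist (by simpa using hs.trans (le_abs_self s))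
  set φ : W → ℝ := fun y => h (‖y‖ ^ 2)
  have hφ : ContDiff ℝ ∞ φ := h.contDiff.comp (contDiff_norm_sq ℝ)
  have hφc : HasCompactSupport φ := hasCompactSupport_comp_norm_sq hε0.le h0
  have hpos : 0 < ∫ y, φ y :=
    hφ.continuous.integral_pos_of_hasCompactSupport_nonneg_nonzero hφc (fun y => h.nonneg)
      (x := 0) (h.pos_of_mem_ball (by simpa using pow_pos hε0 2)).ne'
  have mean_value (z : W) (hz : z ∈ Metric.ball z₀ ε) :
      ∫ y, φ y • U (z - y) = (∫ y, φ y) • U z :=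
    integral_comp_norm_sq_smul_sub_eq (b := b) hE h.contDiff hε0.le h0 hU hUc fun y hy =>
      hRD y <| by
        rw [Metric.mem_ball] at hz ⊢
        linarith [dist_triangle y z z₀, Metric.mem_closedBall.1 hy]
  have hconv : ContDiff ℝ ∞ (fun z => (∫ y, φ y)⁻¹ • ∫ y, φ y • U (z - y)) :=
    contDiff_const.smul (hφc.contDiff_convolution_left (n := ⊤) (ContinuousLinearMap.lsmul ℝ ℝ) hφ
      hU.continuous.locallyIntegrable)
  refine hconv.contDiffAt.congr_of_eventuallyEq ?_
  filter_upwards [Metric.ball_mem_nhds z₀ hε0] with z hz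
  rw [mean_value z hz, inv_smul_smul₀ hpos.ne']

lemma contDiffOn_of_isDiracPair_orthonormal (hE : IsDiracPair E E') {D : Set W} (hD : IsOpen D)
    {u : W → V} (hu : ContDiffOn ℝ 1 u D)
    (h : ∀ x ∈ D, ∑ j, E j (fderiv ℝ u x (b j)) = 0) : ContDiffOn ℝ ∞ u D := by
  intro z hz
  obtain ⟨U, hU, hUc, hUu⟩ :=
    exists_contDiff_hasCompactSupport_eventuallyEq (n := 1) hD (mod_cast hu) hz
  refine ((contDiffAt_of_isDiracPair (b := b) hE (mod_cast hU) hUc ?_).congr_of_eventuallyEq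
    hUu.symm).contDiffWithinAt
  filter_upwards [hUu.eventuallyEq_nhds, hD.mem_nhds hz] with x hx hxD
  simpa only [hx.fderiv_eq] using h x hxD

end InnerProduct

theorem contDiffOn_of_isDiracPair {W : Type*} [NormedAddCommGroup W] [NormedSpace ℝ W]
    (b : Module.Basis ι ℝ W) (hE : IsDiracPair E E') {D : Set W} (hD : IsOpen D) {u : W → V}
    (hu : ContDiffOn ℝ 1 u D) (h : ∀ x ∈ D, ∑ j, E j (fderiv ℝ u x (b j)) = 0) :
    ContDiffOn ℝ ∞ u D := by
  have : FiniteDimensional ℝ W := b.finiteDimensional_of_finite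
  let e : EuclideanSpace ℝ ι ≃L[ℝ] W :=
    ((EuclideanSpace.basisFun ι ℝ).toBasis.equiv b (Equiv.refl ι)).toContinuousLinearEquiv
  have he (j : ι) : e (EuclideanSpace.basisFun ι ℝ j) = b j := by
    simpa [e] using (EuclideanSpace.basisFun ι ℝ).toBasis.equiv_apply j b (Equiv.refl ι)
  have hue : ContDiffOn ℝ ∞ (u ∘ e) (e ⁻¹' D) := by
    refine contDiffOn_of_isDiracPair_orthonormal (b := EuclideanSpace.basisFun ι ℝ) hE
      (hD.preimage e.continuous) (hu.comp e.contDiff.contDiffOn fun x hx => hx) fun x hx => ?_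
    simp only [e.comp_right_fderiv, ContinuousLinearMap.comp_apply,
      ContinuousLinearEquiv.coe_coe, he]
    exact h (e x) hx
  exact e.contDiffOn_comp_iff.1 hue

end Regularity

/-! ### Hadamard quotients -/

section Hadamard
open MeasureTheory intervalIntegral
open scoped ContDiff
variable {V : Type*} [NormedAddCommGroup V] [NormedSpace ℝ V]

section Parametric
variable {H : Type*} [NormedAddCommGroup H] [NormedSpace ℝ H] [FiniteDimensional ℝ H]
  {K : ℝ × H → V} (a b : ℝ)

lemma hasFDerivAt_intervalIntegral_param (hK : ContDiff ℝ 1 K) (z : H) :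
    HasFDerivAt (fun z => ∫ t in a..b, K (t, z))
      (∫ t in a..b, fderiv ℝ K (t, z) ∘L ContinuousLinearMap.inr ℝ ℝ H) z := by
  have hd : Continuous (fun w : ℝ × H => fderiv ℝ K w ∘L ContinuousLinearMap.inr ℝ ℝ H) :=
    (hK.continuous_fderiv one_ne_zero).clm_comp continuous_const
  obtain ⟨C, hC⟩ : ∃ C, ∀ w ∈ Set.uIcc a b ×ˢ Metric.closedBall z 1,
      ‖fderiv ℝ K w ∘L ContinuousLinearMap.inr ℝ ℝ H‖ ≤ C :=
    (isCompact_uIcc.prod (isCompact_closedBall z 1)).exists_bound_of_continuousOn hd.continuousOn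
  refine hasFDerivAt_integral_of_dominated_of_fderiv_le
    (F := fun z t => K (t, z)) (bound := fun _ => C)
    (F' := fun z t => fderiv ℝ K (t, z) ∘L ContinuousLinearMap.inr ℝ ℝ H)
    (Metric.closedBall_mem_nhds z one_pos)
    (Eventually.of_forall fun z => (hK.continuous.comp (by fun_prop)).aestronglyMeasurable)
    ((hK.continuous.comp (by fun_prop)).intervalIntegrable _ _)
    (hd.comp (by fun_prop : Continuous fun t : ℝ => (t, z))).aestronglyMeasurable
    (Eventually.of_forall fun t ht x hx => hC (t, x) ⟨Set.uIoc_subset_uIcc ht, hx⟩)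
    intervalIntegrable_const (Eventually.of_forall fun t _ x _ => ?_)
  exact (hK.differentiable one_ne_zero (t, x)).hasFDerivAt.comp x (hasFDerivAt_prodMk_right t x)

lemma contDiff_intervalIntegral_param [CompleteSpace V] (hK : ContDiff ℝ ∞ K) :
    ContDiff ℝ ∞ (fun z => ∫ t in a..b, K (t, z)) := by
  have hderiv {K : ℝ × H → V} (hK : ContDiff ℝ ∞ K) :=
    hasFDerivAt_intervalIntegral_param a b (hK.of_le (mod_cast le_top))
  refine contDiff_infty.2 fun n => ?_
  induction n generalizing K with
  | zero =>
    exact contDiff_zero.2 (continuous_iff_continuousAt.2 fun z => (hderiv hK z).continuousAt)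
  | succ n ih =>
    push_cast
    refine contDiff_succ_iff_fderiv_apply.2
      ⟨fun z => (hderiv hK z).differentiableAt, by simp, fun y => ?_⟩
    have hcont (z : H) : Continuous fun t => fderiv ℝ K (t, z) ∘L ContinuousLinearMap.inr ℝ ℝ H :=
      ((hK.continuous_fderiv (by simp)).comp (by fun_prop)).clm_comp continuous_const
    simp_rw [(hderiv hK _).fderiv,
      ContinuousLinearMap.intervalIntegral_apply ((hcont _).intervalIntegrable a b)]
    exact ih ((hK.fderiv_right (by simp)).clm_apply contDiff_const)

end Parametric

variable {X : Type*} [NormedAddCommGroup X] [NormedSpace ℝ X]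

/-- The quotient `r⁻¹ F(y, r)`, completed by its limit `∂_r F` on the hyperplane `r = 0`, on which
`F` is meant to vanish. -/
noncomputable def hadamardQuotient (F : X × ℝ → V) (z : X × ℝ) : V :=
  if z.2 = 0 then fderiv ℝ F z (0, 1) else z.2⁻¹ • F z

lemma hadamardQuotient_of_snd_eq_zero (F : X × ℝ → V) {z : X × ℝ} (hz : z.2 = 0) :
    hadamardQuotient F z = fderiv ℝ F z (0, 1) := if_pos hz

lemma hadamardQuotient_of_snd_ne_zero (F : X × ℝ → V) {z : X × ℝ} (hz : z.2 ≠ 0) :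
    hadamardQuotient F z = z.2⁻¹ • F z := if_neg hz

lemma smul_hadamardQuotient {F : X × ℝ → V} {z : X × ℝ} (hF : z.2 = 0 → F z = 0) :
    z.2 • hadamardQuotient F z = F z := by
  by_cases hz : z.2 = 0
  · rw [hz, zero_smul, hF hz]
  · rw [hadamardQuotient_of_snd_ne_zero F hz, smul_inv_smul₀ hz]

lemma smul_integral_fderiv_snd [CompleteSpace V] {U : X × ℝ → V} (hU : ContDiff ℝ 1 U) (y : X)
    (r : ℝ) :
    r • ∫ t in (0 : ℝ)..1, fderiv ℝ U (y, t * r) (0, 1) = U (y, r) - U (y, 0) := by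
  have hd (t : ℝ) :
      HasDerivAt (fun t : ℝ => U (y, t * r)) (r • fderiv ℝ U (y, t * r) (0, 1)) t := by
    have hline : HasDerivAt (fun t : ℝ => (y, t * r)) (r • ((0 : X), (1 : ℝ))) t := by
      simpa using (hasDerivAt_const t y).prodMk ((hasDerivAt_id t).mul_const r)
    simpa only [map_smul, Function.comp_def] using
      (hU.differentiable one_ne_zero _).hasFDerivAt.comp_hasDerivAt t hline
  have hcont : Continuous fun t : ℝ => r • fderiv ℝ U (y, t * r) (0, 1) :=
    (((hU.continuous_fderiv one_ne_zero).comp (by fun_prop)).clm_apply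
      continuous_const).const_smul r
  have hftc := integral_eq_sub_of_hasDerivAt (fun t _ => hd t) (hcont.intervalIntegrable 0 1)
  simpa using hftc

lemma contDiffOn_hadamardQuotient [FiniteDimensional ℝ X] [CompleteSpace V] {F : X × ℝ → V}
    {D : Set (X × ℝ)} (hD : IsOpen D) (hF : ContDiffOn ℝ ∞ F D)
    (hF0 : ∀ z ∈ D, z.2 = 0 → F z = 0) : ContDiffOn ℝ ∞ (hadamardQuotient F) D := by
  intro z₀ hz₀
  refine ContDiffAt.contDiffWithinAt ?_
  by_cases h0 : z₀.2 = 0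
  · obtain ⟨U, hU, -, hUF⟩ := exists_contDiff_hasCompactSupport_eventuallyEq (n := ⊤) hD hF hz₀
    have hsmooth : ContDiff ℝ ∞ fun z : X × ℝ =>
        ∫ t in (0 : ℝ)..1, fderiv ℝ U (z.1, t * z.2) (0, 1) := by
      have hU' : ContDiff ℝ ∞ (fderiv ℝ U) := hU.fderiv_right (by simp)
      exact contDiff_intervalIntegral_param 0 1
        (K := fun w : ℝ × (X × ℝ) => fderiv ℝ U (w.2.1, w.1 * w.2.2) (0, 1))
        ((hU'.comp (by fun_prop)).clm_apply contDiff_const)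
    have hproj : Tendsto (fun z : X × ℝ => (z.1, (0 : ℝ))) (𝓝 z₀) (𝓝 z₀) := by
      have hcont : ContinuousAt (fun z : X × ℝ => (z.1, (0 : ℝ))) z₀ := by fun_prop
      simpa only [ContinuousAt, ← h0] using hcont
    refine hsmooth.contDiffAt.congr_of_eventuallyEq ?_
    filter_upwards [hUF.eventuallyEq_nhds, hproj.eventually hUF, hproj.eventually
      (hD.mem_nhds hz₀)] with z hz hzU hzD
    by_cases hr : z.2 = 0
    · have hz0 : (z.1, (0 : ℝ)) = z := Prod.ext rfl hr.symm
      simp [hadamardQuotient_of_snd_eq_zero F hr, hr, hz0, hz.fderiv_eq]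
    · have hU0 : U (z.1, 0) = 0 := hzU.trans (hF0 _ hzD rfl)
      rw [hadamardQuotient_of_snd_ne_zero F hr, inv_smul_eq_iff₀ hr,
        smul_integral_fderiv_snd (hU.of_le (by simp)), hU0, sub_zero, hz.eq_of_nhds]
  · have hquot : hadamardQuotient F =ᶠ[𝓝 z₀] fun z => z.2⁻¹ • F z := by
      filter_upwards [continuous_snd.continuousAt.eventually_ne h0] with z hz
      exact hadamardQuotient_of_snd_ne_zero F hz
    exact ((contDiffAt_snd.inv h0).smul
      (hF.contDiffAt (hD.mem_nhds hz₀))).congr_of_eventuallyEq hquot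

end Hadamard

/-! ### Functions even in the last variable -/

section Even
open scoped ContDiff

lemma eq_zero_of_neg_snd {X V : Type*} [AddCommGroup V] [Module ℝ V] {K : X × ℝ → V} {z : X × ℝ}
    (hK : K (z.1, -z.2) = -K z) (hz : z.2 = 0) : K z = 0 := by
  rw [show (z.1, -z.2) = z from Prod.ext rfl (by simp [hz])] at hK
  have := IsAddTorsionFree.of_isTorsionFree ℝ V
  exact self_eq_neg.1 hK

lemma eq_of_snd_smul_eq {X V : Type*} [TopologicalSpace X] [NormedAddCommGroup V] [NormedSpace ℝ V]
    {D : Set (X × ℝ)} {Q K : X × ℝ → V} {z : X × ℝ} (hD : IsOpen D) (hQ : ContinuousOn Q D)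
    (hK : ContinuousOn K D) (h : ∀ z ∈ D, z.2 • Q z = z.2 • K z) (hz : z ∈ D) : Q z = K z := by
  by_cases h0 : z.2 = 0
  · have hline : Tendsto (fun t : ℝ => (z.1, t)) (𝓝[≠] 0) (𝓝 z) := by
      have hcont : Tendsto (fun t : ℝ => (z.1, t)) (𝓝 z.2) (𝓝 z) :=
        Continuous.tendsto (by fun_prop) z.2
      exact (h0 ▸ hcont).mono_left nhdsWithin_le_nhds
    refine tendsto_nhds_unique ((hQ.continuousAt (hD.mem_nhds hz)).tendsto.comp hline)
      (((hK.continuousAt (hD.mem_nhds hz)).tendsto.comp hline).congr' ?_)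
    filter_upwards [hline.eventually (hD.mem_nhds hz), self_mem_nhdsWithin] with t ht ht0
    exact (smul_right_injective V ht0 (h (z.1, t) ht)).symm
  · exact smul_right_injective V h0 (h z hz)

variable {X V : Type*} [NormedAddCommGroup X] [NormedSpace ℝ X] [NormedAddCommGroup V]
  [NormedSpace ℝ V] {D : Set (X × ℝ)} {E Q K : X × ℝ → V} {z : X × ℝ}

lemma differentiableAt_of_contDiffOn_infty (hE : ContDiffOn ℝ ∞ E D) (hD : IsOpen D) (hz : z ∈ D) :
    DifferentiableAt ℝ E z :=
  (hE.contDiffAt (hD.mem_nhds hz)).differentiableAt (by simp)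

lemma contDiffOn_fderiv_apply_const (hE : ContDiffOn ℝ ∞ E D) (hD : IsOpen D) (a : X × ℝ) :
    ContDiffOn ℝ ∞ (fun z => fderiv ℝ E z a) D :=
  (hE.fderiv_of_isOpen hD (by simp)).clm_apply contDiffOn_const

lemma fderiv_fderiv_apply_comm (hE : ContDiffOn ℝ ∞ E D) (hD : IsOpen D) (hz : z ∈ D)
    (a b : X × ℝ) :
    fderiv ℝ (fun z => fderiv ℝ E z a) z b = fderiv ℝ (fun z => fderiv ℝ E z b) z a := by
  have hd : DifferentiableAt ℝ (fderiv ℝ E) z :=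
    differentiableAt_of_contDiffOn_infty (hE.fderiv_of_isOpen hD (by simp)) hD hz
  have happ (a b : X × ℝ) :
      fderiv ℝ (fun z => fderiv ℝ E z a) z b = fderiv ℝ (fderiv ℝ E) z b a := by
    simp [fderiv_clm_apply hd (differentiableAt_const a)]
  rw [happ, happ]
  exact ((hE.contDiffAt (hD.mem_nhds hz)).isSymmSndFDerivAt
    (by simpa using ENat.LEInfty.out)).eq b a

lemma fderiv_snd_smul (hQ : DifferentiableAt ℝ Q z) (a : X) (t : ℝ) :
    fderiv ℝ (fun z => z.2 • Q z) z (a, t) = z.2 • fderiv ℝ Q z (a, t) + t • Q z := by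
  simp [fderiv_fun_smul differentiableAt_snd hQ, fderiv_snd]

lemma hadamardQuotient_neg_snd (hK : K (z.1, -z.2) = -K z) :
    hadamardQuotient K (z.1, -z.2) = hadamardQuotient K z := by
  by_cases hz : z.2 = 0
  · rw [show (z.1, -z.2) = z from Prod.ext rfl (by simp [hz])]
  · rw [hadamardQuotient_of_snd_ne_zero K hz,
      hadamardQuotient_of_snd_ne_zero K (by simpa using hz), hK, inv_neg, neg_smul_neg]

/-- Smooth functions on `D ⊆ X × ℝ` that are even in the real variable. -/
structure IsSmoothEvenOn (E : X × ℝ → V) (D : Set (X × ℝ)) : Prop where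
  contDiffOn : ContDiffOn ℝ ∞ E D
  even : ∀ z ∈ D, E (z.1, -z.2) = E z

lemma isSmoothEvenOn_hadamardQuotient [FiniteDimensional ℝ X] [CompleteSpace V] (hD : IsOpen D)
    (hK : ContDiffOn ℝ ∞ K D) (hodd : ∀ z ∈ D, K (z.1, -z.2) = -K z) :
    IsSmoothEvenOn (hadamardQuotient K) D where
  contDiffOn := contDiffOn_hadamardQuotient hD hK fun z hz => eq_zero_of_neg_snd (hodd z hz)
  even z hz := hadamardQuotient_neg_snd (hodd z hz)

lemma IsSmoothEvenOn.differentiableAt (hE : IsSmoothEvenOn E D) (hD : IsOpen D) (hz : z ∈ D) :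
    DifferentiableAt ℝ E z :=
  differentiableAt_of_contDiffOn_infty hE.contDiffOn hD hz

lemma IsSmoothEvenOn.fderiv_neg_snd_apply (hE : IsSmoothEvenOn E D) (hD : IsOpen D)
    (hR : ∀ z ∈ D, (z.1, -z.2) ∈ D) (hz : z ∈ D) (a : X) (t : ℝ) :
    fderiv ℝ E (z.1, -z.2) (a, t) = fderiv ℝ E z (a, -t) := by
  let refl : X × ℝ →L[ℝ] X × ℝ :=
    (ContinuousLinearMap.fst ℝ X ℝ).prod (-ContinuousLinearMap.snd ℝ X ℝ)
  have heven : (fun w => E (refl w)) =ᶠ[𝓝 z] E := by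
    filter_upwards [hD.mem_nhds hz] with w hw using hE.even w hw
  have hcomp : HasFDerivAt (fun w => E (refl w)) (fderiv ℝ E (refl z) ∘L refl) z :=
    (hE.differentiableAt hD (hR z hz)).hasFDerivAt.comp z refl.hasFDerivAt
  rw [← heven.fderiv_eq, hcomp.fderiv]
  simp [refl]

lemma IsSmoothEvenOn.fderiv_neg_snd_zero_one (hE : IsSmoothEvenOn E D) (hD : IsOpen D)
    (hR : ∀ z ∈ D, (z.1, -z.2) ∈ D) (hz : z ∈ D) :
    fderiv ℝ E (z.1, -z.2) (0, 1) = -fderiv ℝ E z (0, 1) := by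
  rw [hE.fderiv_neg_snd_apply hD hR hz, ← map_neg, Prod.neg_mk, neg_zero]

lemma IsSmoothEvenOn.fderiv_fst (hE : IsSmoothEvenOn E D) (hD : IsOpen D)
    (hR : ∀ z ∈ D, (z.1, -z.2) ∈ D) (a : X) :
    IsSmoothEvenOn (fun z => fderiv ℝ E z (a, 0)) D where
  contDiffOn := contDiffOn_fderiv_apply_const hE.contDiffOn hD (a, 0)
  even z hz := by rw [hE.fderiv_neg_snd_apply hD hR hz, neg_zero]

end Even

/-! ### The operators `(1/r)∂_r` and `∂_r(1/r)` -/

section RadialDerivative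
open scoped ContDiff
variable {V : Type*} [NormedAddCommGroup V] [NormedSpace ℝ V] {p : ℕ}
  {D : Set ((Fin (p + 1) → ℝ) × ℝ)} {E Q K : (Fin (p + 1) → ℝ) × ℝ → V}
  {z : (Fin (p + 1) → ℝ) × ℝ}

lemma T1_eq_hadamardQuotient : T1 p E = hadamardQuotient (pdSr p E) := rfl

lemma IsSmoothEvenOn.T1 [CompleteSpace V] (hE : IsSmoothEvenOn E D) (hD : IsOpen D)
    (hR : ∀ z ∈ D, reflD p z ∈ D) : IsSmoothEvenOn (T1 p E) D :=
  isSmoothEvenOn_hadamardQuotient hD (contDiffOn_fderiv_apply_const hE.contDiffOn hD _)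
    fun _ hz => hE.fderiv_neg_snd_zero_one hD hR hz

lemma IsSmoothEvenOn.snd_smul_T1 (hE : IsSmoothEvenOn E D) (hD : IsOpen D)
    (hR : ∀ z ∈ D, reflD p z ∈ D) (hz : z ∈ D) : z.2 • GPSM.T1 p E z = pdSr p E z := by
  rw [T1_eq_hadamardQuotient]
  exact smul_hadamardQuotient (eq_zero_of_neg_snd (hE.fderiv_neg_snd_zero_one hD hR hz))

lemma IsSmoothEvenOn.snd_smul_pdSx_T1 [CompleteSpace V] (hE : IsSmoothEvenOn E D) (hD : IsOpen D)
    (hR : ∀ z ∈ D, reflD p z ∈ D) (s : Fin (p + 1)) (hz : z ∈ D) :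
    z.2 • pdSx p s (GPSM.T1 p E) z = pdSr p (pdSx p s E) z := by
  have hT1 : pdSr p E =ᶠ[𝓝 z] fun z => z.2 • GPSM.T1 p E z := by
    filter_upwards [hD.mem_nhds hz] with w hw using (hE.snd_smul_T1 hD hR hw).symm
  calc z.2 • pdSx p s (GPSM.T1 p E) z
      = fderiv ℝ (fun z => z.2 • GPSM.T1 p E z) z (Pi.single s 1, 0) := by
        rw [fderiv_snd_smul ((hE.T1 hD hR).differentiableAt hD hz), zero_smul, add_zero, pdSx]
    _ = pdSx p s (pdSr p E) z := by rw [← hT1.fderiv_eq, pdSx]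
    _ = pdSr p (pdSx p s E) z := fderiv_fderiv_apply_comm hE.contDiffOn hD hz _ _

lemma T2_eq_of_snd_eq_zero (hE : IsSmoothEvenOn E D) (hD : IsOpen D)
    (hR : ∀ z ∈ D, reflD p z ∈ D) (hK : ∀ z ∈ D, K z = z.2 • E z) (hz : z ∈ D) (h0 : z.2 = 0) :
    T2 p K z = 0 := by
  have hpdSr : pdSr p K =ᶠ[𝓝 z] fun z => z.2 • pdSr p E z + E z := by
    filter_upwards [hD.eventually_mem hz] with w hw
    have hKw : K =ᶠ[𝓝 w] fun z => z.2 • E z := by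
      filter_upwards [hD.mem_nhds hw] with w' hw' using hK w' hw'
    rw [pdSr, hKw.fderiv_eq, fderiv_snd_smul (hE.differentiableAt hD hw), one_smul, pdSr]
  have hdiff : DifferentiableAt ℝ (pdSr p E) z :=
    differentiableAt_of_contDiffOn_infty (contDiffOn_fderiv_apply_const hE.contDiffOn hD _) hD hz
  have hpdSr0 : pdSr p E z = 0 := eq_zero_of_neg_snd (hE.fderiv_neg_snd_zero_one hD hR hz) h0
  have hsmul : DifferentiableAt ℝ
      (fun z : (Fin (p + 1) → ℝ) × ℝ => z.2 • pdSr p E z) z := differentiableAt_snd.smul hdiff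
  have hpdSr2 : pdSr2 p K z = 0 := by
    rw [pdSr2, pdSr, hpdSr.fderiv_eq, fderiv_fun_add hsmul (hE.differentiableAt hD hz),
      add_apply, fderiv_snd_smul hdiff, h0, zero_smul, one_smul, zero_add, hpdSr0, zero_add,
      ← pdSr, hpdSr0]
  simp [T2, h0, hpdSr2]

lemma T2_eq_of_snd_ne_zero (hD : IsOpen D) (hQ : DifferentiableAt ℝ Q z)
    (hK : ∀ z ∈ D, K z = z.2 • Q z) (hz : z ∈ D) (h0 : z.2 ≠ 0) : T2 p K z = pdSr p Q z := by
  have hline : Tendsto (fun t : ℝ => (z.1, t)) (𝓝 z.2) (𝓝 z) :=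
    Continuous.tendsto (by fun_prop) z.2
  have hquot : (fun t : ℝ => t⁻¹ • K (z.1, t)) =ᶠ[𝓝 z.2] fun t => Q (z.1, t) := by
    filter_upwards [hline.eventually (hD.mem_nhds hz), isOpen_ne.mem_nhds h0] with t ht ht0
    rw [hK _ ht, inv_smul_smul₀ ht0]
  have hcomp : HasFDerivAt (fun t => Q (z.1, t))
      (fderiv ℝ Q z ∘L ContinuousLinearMap.inr ℝ _ ℝ) z.2 :=
    HasFDerivAt.comp z.2 (f := fun t => (z.1, t)) hQ.hasFDerivAt (hasFDerivAt_prodMk_right z.1 z.2)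
  rw [T2, if_neg h0, hquot.fderiv_eq, hcomp.fderiv]
  rfl

lemma T2_eq_snd_smul_T1 (hE : IsSmoothEvenOn E D) (hD : IsOpen D)
    (hR : ∀ z ∈ D, reflD p z ∈ D) (hK : ∀ z ∈ D, K z = z.2 • E z) (hz : z ∈ D) :
    T2 p K z = z.2 • T1 p E z := by
  by_cases h0 : z.2 = 0
  · rw [T2_eq_of_snd_eq_zero hE hD hR hK hz h0, h0, zero_smul]
  · rw [hE.snd_smul_T1 hD hR hz, T2_eq_of_snd_ne_zero hD (hE.differentiableAt hD hz) hK hz h0]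

lemma IsSmoothEvenOn.iterate_T1 [CompleteSpace V] (hE : IsSmoothEvenOn E D) (hD : IsOpen D)
    (hR : ∀ z ∈ D, reflD p z ∈ D) (k : ℕ) : IsSmoothEvenOn ((GPSM.T1 p)^[k] E) D := by
  induction k with
  | zero => exact hE
  | succ k ih => exact Function.iterate_succ_apply' (GPSM.T1 p) k E ▸ ih.T1 hD hR

lemma iterate_T2_eq_snd_smul_iterate_T1 [CompleteSpace V] (hE : IsSmoothEvenOn E D) (hD : IsOpen D)
    (hR : ∀ z ∈ D, reflD p z ∈ D) (hK : ∀ z ∈ D, K z = z.2 • E z) (k : ℕ) :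
    ∀ z ∈ D, (T2 p)^[k] K z = z.2 • (T1 p)^[k] E z := by
  induction k with
  | zero => exact hK
  | succ k ih =>
    intro z hz
    rw [Function.iterate_succ_apply', Function.iterate_succ_apply']
    exact T2_eq_snd_smul_T1 (hE.iterate_T1 hD hR k) hD hR ih hz

end RadialDerivative

/-! ### Clifford systems of operators -/

section CliffordSystem
variable {V : Type*} [NormedAddCommGroup V] [NormedSpace ℝ V] {L : ℕ → V →L[ℝ] V} {m : ℕ}

/-- A system of operators `L 0 = id, L 1, …, L m` such that `L 1, …, L m` square to `-1` and
anticommute, as left multiplication by the elements of a hypercomplex basis does. -/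
structure IsCliffordSystem (L : ℕ → V →L[ℝ] V) (m : ℕ) : Prop where
  apply_zero : ∀ a, L 0 a = a
  sq : ∀ s, s ≠ 0 → s ≤ m → ∀ a, L s (L s a) = -a
  anticomm : ∀ s t, s ≠ 0 → t ≠ 0 → s ≤ m → t ≤ m → s ≠ t → ∀ a, L s (L t a) = -L t (L s a)

/-- The conjugate of a Clifford system: every operator but the zeroth one changes sign. -/
def cliffordConj (L : ℕ → V →L[ℝ] V) (s : ℕ) : V →L[ℝ] V :=
  if s = 0 then L 0 else -L s

lemma cliffordConj_zero : cliffordConj L 0 = L 0 := rfl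

lemma cliffordConj_of_ne_zero {s : ℕ} (hs : s ≠ 0) : cliffordConj L s = -L s := if_neg hs

lemma cliffordConj_cliffordConj : cliffordConj (cliffordConj L) = L := by
  ext s : 1
  by_cases hs : s = 0 <;> simp [cliffordConj, hs]

namespace IsCliffordSystem

lemma cliffordConj (h : IsCliffordSystem L m) : IsCliffordSystem (cliffordConj L) m where
  apply_zero := h.apply_zero
  sq s hs hsm a := by simp [cliffordConj_of_ne_zero hs, h.sq s hs hsm]
  anticomm s t hs ht hsm htm hst a := by
    simp [cliffordConj_of_ne_zero hs, cliffordConj_of_ne_zero ht, h.anticomm s t hs ht hsm htm hst]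

lemma conj_apply_add_conj_apply (h : IsCliffordSystem L m) {s t : ℕ} (hs : s ≤ m) (ht : t ≤ m)
    (a : V) :
    GPSM.cliffordConj L s (L t a) + GPSM.cliffordConj L t (L s a) =
      if s = t then (2 : ℝ) • a else 0 := by
  rcases eq_or_ne s 0 with rfl | hs0 <;> rcases eq_or_ne t 0 with rfl | ht0
  · simp [cliffordConj_zero, h.apply_zero, two_smul]
  · simp [cliffordConj_zero, cliffordConj_of_ne_zero ht0, h.apply_zero, ht0.symm]
  · simp [cliffordConj_zero, cliffordConj_of_ne_zero hs0, h.apply_zero, hs0]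
  · rcases eq_or_ne s t with rfl | hst
    · simp [cliffordConj_of_ne_zero hs0, h.sq s hs0 hs, two_smul]
    · simp [cliffordConj_of_ne_zero hs0, cliffordConj_of_ne_zero ht0, hst,
        h.anticomm s t hs0 ht0 hs ht hst]

lemma apply_conj_add_apply_conj (h : IsCliffordSystem L m) {s t : ℕ} (hs : s ≤ m) (ht : t ≤ m)
    (a : V) :
    L s (GPSM.cliffordConj L t a) + L t (GPSM.cliffordConj L s a) =
      if s = t then (2 : ℝ) • a else 0 := by
  simpa only [cliffordConj_cliffordConj] using h.cliffordConj.conj_apply_add_conj_apply hs ht a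

lemma apply_apply_of_lt (h : IsCliffordSystem L m) {s t : ℕ} (hst : s < t) (ht : t ≤ m) (a : V) :
    L s (L t a) = L t (GPSM.cliffordConj L s a) := by
  rcases eq_or_ne s 0 with rfl | hs0
  · simp [cliffordConj_zero, h.apply_zero]
  · simp [cliffordConj_of_ne_zero hs0,
      h.anticomm s t hs0 (by lia) (hst.le.trans ht) ht hst.ne]

end IsCliffordSystem

end CliffordSystem

/-! ### Regularity of stem functions -/

section StemRegularity
open scoped ContDiff
variable {V : Type*} [NormedAddCommGroup V] [NormedSpace ℝ V] {L : ℕ → V →L[ℝ] V} {m p : ℕ}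
  {D : Set ((Fin (p + 1) → ℝ) × ℝ)} {E F₁ F₂ : (Fin (p + 1) → ℝ) × ℝ → V}
  {z : (Fin (p + 1) → ℝ) × ℝ}

/-- The operator `∑ₛ Lₛ ∂_{xₛ}` in the first `p + 1` variables of `ℝ^{p+2}`; for `Lₛ` the left
multiplication by `vₛ` this is `D_{x_p}`, and `D̄_{x_p}` for the conjugate system. -/
noncomputable def diracSx (L : ℕ → V →L[ℝ] V) (p : ℕ) (E : (Fin (p + 1) → ℝ) × ℝ → V)
    (z : (Fin (p + 1) → ℝ) × ℝ) : V :=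
  ∑ s : Fin (p + 1), L s (pdSx p s E z)

/-- The generalized Cauchy-Riemann system for a pair `(F₁, F₂)`, with left multiplications replaced
by an arbitrary system of operators. -/
structure IsStemRegularOn (L : ℕ → V →L[ℝ] V) (F₁ F₂ : (Fin (p + 1) → ℝ) × ℝ → V)
    (D : Set ((Fin (p + 1) → ℝ) × ℝ)) : Prop where
  diracSx_fst : ∀ z ∈ D, diracSx L p F₁ z = pdSr p F₂ z
  diracSx_snd : ∀ z ∈ D, diracSx (cliffordConj L) p F₂ z = -pdSr p F₁ z

/-- The coefficients of the Cauchy-Riemann system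
`D_{x_p} F₁ - ∂_r F₂ = 0`, `∂_r F₁ + D̄_{x_p} F₂ = 0` as a first order system for `(F₁, F₂)`. -/
def stemSymbol (L : ℕ → V →L[ℝ] V) (p : ℕ) : Fin (p + 1) ⊕ Unit → (V × V) →L[ℝ] (V × V) :=
  Sum.elim (fun s => (L s).prodMap (cliffordConj L s))
    fun _ => (-ContinuousLinearMap.snd ℝ V V).prod (ContinuousLinearMap.fst ℝ V V)

/-- The coefficients of the adjoint of the Cauchy-Riemann system. -/
def stemSymbolConj (L : ℕ → V →L[ℝ] V) (p : ℕ) : Fin (p + 1) ⊕ Unit → (V × V) →L[ℝ] (V × V) :=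
  Sum.elim (fun s => (cliffordConj L s).prodMap (L s))
    fun _ => (ContinuousLinearMap.snd ℝ V V).prod (-ContinuousLinearMap.fst ℝ V V)

lemma isDiracPair_stemSymbol (h : IsCliffordSystem L m) (hp : p ≤ m) :
    IsDiracPair (stemSymbol L p) (stemSymbolConj L p) where
  add_comp := by
    rintro (s | u) (t | w) ⟨x, y⟩
    · have hs : (s : ℕ) ≤ m := by lia
      have ht : (t : ℕ) ≤ m := by lia
      have hfst := h.conj_apply_add_conj_apply hs ht x
      have hsnd := h.apply_conj_add_apply_conj hs ht y
      change (cliffordConj L s (L t x) + cliffordConj L t (L s x),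
        L s (cliffordConj L t y) + L t (cliffordConj L s y)) = _
      rw [hfst, hsnd]
      simp only [Sum.inl.injEq, Fin.ext_iff]
      split_ifs <;> rfl
    · simp [stemSymbol, stemSymbolConj]
    · simp [stemSymbol, stemSymbolConj]
    · simp [stemSymbol, stemSymbolConj, two_smul]

lemma IsStemRegularOn.contDiffOn [FiniteDimensional ℝ V] (hF : IsStemRegularOn L F₁ F₂ D)
    (h : IsCliffordSystem L m) (hp : p ≤ m) (hD : IsOpen D) (hF₁ : ContDiffOn ℝ 1 F₁ D)
    (hF₂ : ContDiffOn ℝ 1 F₂ D) : ContDiffOn ℝ ∞ F₁ D ∧ ContDiffOn ℝ ∞ F₂ D := by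
  let b : Module.Basis (Fin (p + 1) ⊕ Unit) ℝ ((Fin (p + 1) → ℝ) × ℝ) :=
    (Pi.basisFun ℝ (Fin (p + 1))).prod (Module.Basis.singleton Unit ℝ)
  have hsystem (z) (hz : z ∈ D) :
      ∑ i, stemSymbol L p i (fderiv ℝ (fun z => (F₁ z, F₂ z)) z (b i)) = 0 := by
    have hd₁ : DifferentiableAt ℝ F₁ z :=
      (hF₁.contDiffAt (hD.mem_nhds hz)).differentiableAt (by simp)
    have hd₂ : DifferentiableAt ℝ F₂ z :=
      (hF₂.contDiffAt (hD.mem_nhds hz)).differentiableAt (by simp)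
    have hdirac : ∑ s, stemSymbol L p (.inl s) (fderiv ℝ (fun z => (F₁ z, F₂ z)) z (b (.inl s))) =
        (diracSx L p F₁ z, diracSx (cliffordConj L) p F₂ z) := by
      simp [b, hd₁.fderiv_prodMk hd₂, stemSymbol, diracSx, pdSx, Prod.ext_iff, Prod.fst_sum,
        Prod.snd_sum]
    rw [Fintype.sum_sum_type, hdirac, hF.diracSx_fst z hz, hF.diracSx_snd z hz]
    simp [b, hd₁.fderiv_prodMk hd₂, stemSymbol, pdSr]
  have hpair : ContDiffOn ℝ ∞ (fun z => (F₁ z, F₂ z)) D :=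
    contDiffOn_of_isDiracPair b (isDiracPair_stemSymbol h hp) hD (hF₁.prodMk hF₂) hsystem
  exact ⟨contDiff_fst.comp_contDiffOn hpair, contDiff_snd.comp_contDiffOn hpair⟩

lemma diracSx_snd_smul {G : (Fin (p + 1) → ℝ) × ℝ → V} (hG : DifferentiableAt ℝ G z) :
    diracSx L p (fun z => z.2 • G z) z = z.2 • diracSx L p G z := by
  simp [diracSx, pdSx, fderiv_snd_smul hG, Finset.smul_sum]

lemma continuousOn_diracSx (hE : ContDiffOn ℝ ∞ E D) (hD : IsOpen D) (L : ℕ → V →L[ℝ] V) :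
    ContinuousOn (diracSx L p E) D :=
  continuousOn_finsetSum _ fun s _ =>
    (L s).continuous.comp_continuousOn (contDiffOn_fderiv_apply_const hE hD _).continuousOn

lemma IsSmoothEvenOn.snd_smul_diracSx_T1 [CompleteSpace V] (hE : IsSmoothEvenOn E D)
    (hD : IsOpen D) (hR : ∀ z ∈ D, reflD p z ∈ D) (hz : z ∈ D) :
    z.2 • diracSx L p (GPSM.T1 p E) z = pdSr p (diracSx L p E) z := by
  have hderiv : HasFDerivAt (diracSx L p E)
      (∑ s : Fin (p + 1), L s ∘L fderiv ℝ (pdSx p s E) z) z :=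
    HasFDerivAt.fun_sum fun s _ => (L s).hasFDerivAt.comp z <|
      (differentiableAt_of_contDiffOn_infty (contDiffOn_fderiv_apply_const hE.contDiffOn hD _)
        hD hz).hasFDerivAt
  rw [pdSr, hderiv.fderiv, sum_apply, diracSx, Finset.smul_sum]
  refine Finset.sum_congr rfl fun s _ => ?_
  rw [← map_smul, hE.snd_smul_pdSx_T1 hD hR s hz]
  rfl

end StemRegularity

/-! ### Vekua pairs -/

section VekuaPair
open scoped ContDiff
variable {V : Type*} [NormedAddCommGroup V] [NormedSpace ℝ V] {L : ℕ → V →L[ℝ] V} {m p : ℕ} {c : ℝ}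
  {D : Set ((Fin (p + 1) → ℝ) × ℝ)} {E G F₁ F₂ : (Fin (p + 1) → ℝ) × ℝ → V}

/-- Pairs of smooth functions on `D`, even in `r`, solving
`D_{x_p} E = c G + r ∂_r G` and `D̄_{x_p} G = -(1/r) ∂_r E`.  For `c = 1` this is the generalized
Cauchy-Riemann system for the stem function `(E, r G)`; for `c = q` it says that
`x ↦ E + x_q G` is monogenic. -/
structure IsVekuaPair (L : ℕ → V →L[ℝ] V) (c : ℝ) (E G : (Fin (p + 1) → ℝ) × ℝ → V)
    (D : Set ((Fin (p + 1) → ℝ) × ℝ)) : Prop where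
  even_fst : IsSmoothEvenOn E D
  even_snd : IsSmoothEvenOn G D
  diracSx_fst : ∀ z ∈ D, diracSx L p E z = c • G z + z.2 ^ 2 • T1 p G z
  diracSx_snd : ∀ z ∈ D, diracSx (cliffordConj L) p G z = -T1 p E z

namespace IsVekuaPair
variable [CompleteSpace V]

lemma diracSx_T1_fst (h : IsVekuaPair L c E G D) (hD : IsOpen D) (hR : ∀ z ∈ D, reflD p z ∈ D) :
    ∀ z ∈ D, diracSx L p (T1 p E) z = (c + 2) • T1 p G z + z.2 ^ 2 • T1 p (T1 p G) z := by
  have hG₁ := h.even_snd.T1 hD hR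
  refine fun z hz => eq_of_snd_smul_eq hD
    (continuousOn_diracSx (h.even_fst.T1 hD hR).contDiffOn hD L)
    ((continuousOn_const.smul hG₁.contDiffOn.continuousOn).add
      ((continuous_snd.pow 2).continuousOn.smul (hG₁.T1 hD hR).contDiffOn.continuousOn))
    (fun z hz => ?_) hz
  have hfst : diracSx L p E =ᶠ[𝓝 z] fun z => c • G z + z.2 • z.2 • T1 p G z := by
    filter_upwards [hD.mem_nhds hz] with w hw
    rw [h.diracSx_fst w hw, smul_smul, pow_two]
  have hdG : DifferentiableAt ℝ G z := h.even_snd.differentiableAt hD hz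
  have hdG₁ : DifferentiableAt ℝ (T1 p G) z := hG₁.differentiableAt hD hz
  have hdrG₁ : DifferentiableAt ℝ (fun z : (Fin (p + 1) → ℝ) × ℝ => z.2 • T1 p G z) z :=
    differentiableAt_snd.smul hdG₁
  have hdrrG₁ : DifferentiableAt ℝ (fun z : (Fin (p + 1) → ℝ) × ℝ => z.2 • z.2 • T1 p G z) z :=
    differentiableAt_snd.smul hdrG₁
  calc z.2 • diracSx L p (T1 p E) z
      = pdSr p (diracSx L p E) z := h.even_fst.snd_smul_diracSx_T1 hD hR hz
    _ = c • pdSr p G z + (z.2 • (z.2 • pdSr p (T1 p G) z + T1 p G z) + z.2 • T1 p G z) := by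
        rw [pdSr, hfst.fderiv_eq, fderiv_fun_add (hdG.fun_const_smul c) hdrrG₁,
          fderiv_fun_const_smul hdG, add_apply, smul_apply, fderiv_snd_smul hdrG₁,
          fderiv_snd_smul hdG₁, one_smul, one_smul, pdSr, pdSr]
    _ = z.2 • ((c + 2) • T1 p G z + z.2 ^ 2 • T1 p (T1 p G) z) := by
        rw [← h.even_snd.snd_smul_T1 hD hR hz, ← hG₁.snd_smul_T1 hD hR hz]
        module

lemma diracSx_T1_snd (h : IsVekuaPair L c E G D) (hD : IsOpen D) (hR : ∀ z ∈ D, reflD p z ∈ D) :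
    ∀ z ∈ D, diracSx (cliffordConj L) p (T1 p G) z = -T1 p (T1 p E) z := by
  have hE₁ := h.even_fst.T1 hD hR
  refine fun z hz => eq_of_snd_smul_eq hD
    (continuousOn_diracSx (h.even_snd.T1 hD hR).contDiffOn hD _)
    (hE₁.T1 hD hR).contDiffOn.continuousOn.fun_neg (fun z hz => ?_) hz
  have hsnd : diracSx (cliffordConj L) p G =ᶠ[𝓝 z] fun z => -T1 p E z := by
    filter_upwards [hD.mem_nhds hz] with w hw using h.diracSx_snd w hw
  rw [h.even_snd.snd_smul_diracSx_T1 hD hR hz, pdSr, hsnd.fderiv_eq, fderiv_fun_neg, neg_apply,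
    smul_neg, hE₁.snd_smul_T1 hD hR hz, pdSr]

lemma T1 (h : IsVekuaPair L c E G D) (hD : IsOpen D) (hR : ∀ z ∈ D, reflD p z ∈ D) :
    IsVekuaPair L (c + 2) (T1 p E) (T1 p G) D where
  even_fst := h.even_fst.T1 hD hR
  even_snd := h.even_snd.T1 hD hR
  diracSx_fst := h.diracSx_T1_fst hD hR
  diracSx_snd := h.diracSx_T1_snd hD hR

lemma iterate_T1 (h : IsVekuaPair L c E G D) (hD : IsOpen D) (hR : ∀ z ∈ D, reflD p z ∈ D) (k : ℕ) :
    IsVekuaPair L (c + 2 * k) ((GPSM.T1 p)^[k] E) ((GPSM.T1 p)^[k] G) D := by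
  induction k with
  | zero => simpa using h
  | succ k ih =>
    rw [Function.iterate_succ_apply', Function.iterate_succ_apply']
    convert ih.T1 hD hR using 1
    push_cast
    ring

end IsVekuaPair

lemma IsStemRegularOn.isVekuaPair [FiniteDimensional ℝ V] (hF : IsStemRegularOn L F₁ F₂ D)
    (h : IsCliffordSystem L m) (hp : p ≤ m) (hD : IsOpen D) (hR : ∀ z ∈ D, reflD p z ∈ D)
    (hstem : IsStem p D F₁ F₂) (hF₁ : ContDiffOn ℝ 1 F₁ D) (hF₂ : ContDiffOn ℝ 1 F₂ D) :
    IsVekuaPair L 1 F₁ (hadamardQuotient F₂) D := by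
  have := FiniteDimensional.complete ℝ V
  obtain ⟨hs₁, hs₂⟩ := hF.contDiffOn h hp hD hF₁ hF₂
  have hE : IsSmoothEvenOn F₁ D := ⟨hs₁, fun z hz => (hstem z hz).1⟩
  have hG : IsSmoothEvenOn (hadamardQuotient F₂) D :=
    isSmoothEvenOn_hadamardQuotient hD hs₂ fun z hz => (hstem z hz).2
  have hF₂G (z) (hz : z ∈ D) : F₂ =ᶠ[𝓝 z] fun z => z.2 • hadamardQuotient F₂ z := by
    filter_upwards [hD.mem_nhds hz] with w hw
    exact (smul_hadamardQuotient (eq_zero_of_neg_snd (hstem w hw).2)).symm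
  refine ⟨hE, hG, fun z hz => ?_, fun z hz => eq_of_snd_smul_eq hD
    (continuousOn_diracSx hG.contDiffOn hD _) (hE.T1 hD hR).contDiffOn.continuousOn.fun_neg
    (fun z hz => ?_) hz⟩
  · rw [hF.diracSx_fst z hz, pdSr, (hF₂G z hz).fderiv_eq,
      fderiv_snd_smul (hG.differentiableAt hD hz), ← pdSr, ← hG.snd_smul_T1 hD hR hz]
    module
  · have hcongr : diracSx (cliffordConj L) p F₂ z =
        diracSx (cliffordConj L) p (fun z => z.2 • hadamardQuotient F₂ z) z := by
      simp only [diracSx, pdSx, (hF₂G z hz).fderiv_eq]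
    rw [← diracSx_snd_smul (hG.differentiableAt hD hz), ← hcongr, hF.diracSx_snd z hz, smul_neg,
      hE.snd_smul_T1 hD hR hz]

end VekuaPair

/-! ### Left multiplications in an alternative algebra -/

section Algebra
variable {A : Type*} [NormedAddCommGroup A] [NormedSpace ℝ A] [Mul A] [One A] {conj : A → A}
  {v : ℕ → A} {m : ℕ}

/-- Left multiplication `a ↦ (b ↦ a * b)` on the finite-dimensional algebra `A`. -/
noncomputable def lmul (H : IsAltStarAlg A conj) : A →ₗ[ℝ] A →L[ℝ] A :=
  haveI := H.finDim
  LinearMap.toContinuousLinearMap.toLinearMap ∘ₗ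
    LinearMap.mk₂ ℝ (· * ·) H.add_mul' H.smul_mul' H.mul_add' H.mul_smul'

namespace IsAltStarAlg

lemma lmul_apply (H : IsAltStarAlg A conj) (a b : A) : lmul H a b = a * b := rfl

lemma one_ne_zero (H : IsAltStarAlg A conj) : (1 : A) ≠ 0 := by
  intro h
  have eq_zero (a : A) : a = 0 := by rw [← H.one_mul' a, h, ← H.lmul_apply, map_zero, zero_apply]
  have : Subsingleton A := ⟨fun a b => by rw [eq_zero a, eq_zero b]⟩
  simpa [Module.finrank_zero_of_subsingleton] using H.one_lt_finrank

end IsAltStarAlg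

namespace IsHypBasis

lemma mul_self (hv : IsHypBasis A conj v m) (H : IsAltStarAlg A conj) {s : ℕ} (hs : s ≠ 0)
    (hsm : s ≤ m) : v s * v s = -1 := by
  have hconj : conj (v s) = -v s :=
    (neg_eq_of_add_eq_zero_right (hv.trace_zero s (Nat.one_le_iff_ne_zero.2 hs) hsm)).symm
  have hnorm := hv.norm_one s (Nat.one_le_iff_ne_zero.2 hs) hsm
  rw [hconj, ← H.lmul_apply, map_neg, H.lmul_apply] at hnorm
  rw [← hnorm, neg_neg]

-- The alternative law for `v s + v t` makes the left multiplications anticommute.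
lemma isCliffordSystem (hv : IsHypBasis A conj v m) (H : IsAltStarAlg A conj) :
    IsCliffordSystem (fun s => lmul H (v s)) m where
  apply_zero a := by rw [H.lmul_apply, hv.v_zero, H.one_mul']
  sq s hs hsm a := by
    rw [H.lmul_apply, H.lmul_apply, H.alt_left, hv.mul_self H hs hsm, ← H.lmul_apply, map_neg,
      neg_apply, H.lmul_apply, H.one_mul']
  anticomm s t hs ht hsm htm hst a := by
    have hvst : v s * v t + v t * v s = 0 := by
      rw [hv.anticomm s t (by lia) hsm (by lia) htm hst, neg_add_cancel]
    have alt : (v s + v t) * ((v s + v t) * a) = (v s + v t) * (v s + v t) * a := H.alt_left _ a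
    have hsq : (v s + v t) * (v s + v t) = v s * v s + v t * v t := by
      rw [H.add_mul', H.mul_add', H.mul_add', ← add_zero (v s * v s + v t * v t), ← hvst]
      abel
    rw [hsq, H.add_mul', H.add_mul', H.add_mul', H.mul_add', H.mul_add', H.alt_left,
      H.alt_left] at alt
    refine eq_neg_of_add_eq_zero_left ?_
    change v s * (v t * a) + v t * (v s * a) = 0
    rw [← sub_eq_zero] at alt
    rw [← alt]
    abel

end IsHypBasis

lemma StemCR.isStemRegularOn {p : ℕ} {D : Set ((Fin (p + 1) → ℝ) × ℝ)}
    {F₁ F₂ : (Fin (p + 1) → ℝ) × ℝ → A} (hF : StemCR v p D F₁ F₂) (H : IsAltStarAlg A conj)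
    (hv : v 0 = 1) : IsStemRegularOn (fun s => lmul H (v s)) F₁ F₂ D where
  diracSx_fst z hz := sub_eq_zero.1 (hF z hz).1
  diracSx_snd z hz := by
    rw [← eq_neg_of_add_eq_zero_left (hF z hz).2, diracSx, DbaropSx, Fin.sum_univ_succ,
      Fin.sum_univ_succ]
    simp [cliffordConj_zero, cliffordConj_of_ne_zero, H.lmul_apply, hv, H.one_mul',
      sub_eq_add_neg]

end Algebra

/-! ### The map `x ↦ (x_p, r)` -/

section Rho
open scoped ContDiff
variable {m p : ℕ} {x : Fin (m + 1) → ℝ}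

/-- The projection `x ↦ x_p` as a continuous linear map. -/
noncomputable def projPL (m p : ℕ) : (Fin (m + 1) → ℝ) →L[ℝ] (Fin (p + 1) → ℝ) :=
  ContinuousLinearMap.pi fun s =>
    if h : (s : ℕ) < m + 1 then ContinuousLinearMap.proj ⟨(s : ℕ), h⟩ else 0

lemma coe_projPL : ⇑(projPL m p) = projP m p := by
  ext x s
  simp only [projPL, projP, ContinuousLinearMap.pi_apply]
  split_ifs <;> rfl

/-- The projection `x ↦ x_q` as a continuous linear map. -/
noncomputable def xqpartL (m p : ℕ) : (Fin (m + 1) → ℝ) →L[ℝ] (Fin (m + 1) → ℝ) :=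
  ContinuousLinearMap.pi fun s => if (s : ℕ) ≤ p then 0 else ContinuousLinearMap.proj s

lemma coe_xqpartL : ⇑(xqpartL m p) = xqpart m p := by
  ext x s
  simp only [xqpartL, xqpart, ContinuousLinearMap.pi_apply]
  split_ifs <;> rfl

lemma xqpart_of_le {s : Fin (m + 1)} (hs : (s : ℕ) ≤ p) : xqpart m p x s = 0 := if_pos hs

lemma xqpart_of_lt {s : Fin (m + 1)} (hs : p < (s : ℕ)) : xqpart m p x s = x s := if_neg hs.not_ge

lemma abs_xqpart_le (s : Fin (m + 1)) : |xqpart m p x s| ≤ ‖x‖ := by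
  rcases le_or_gt (s : ℕ) p with hs | hs
  · simp [xqpart_of_le hs]
  · rw [xqpart_of_lt hs, ← Real.norm_eq_abs]
    exact norm_le_pi_norm x s

/-- The linear form `h ↦ ⟨x_q, h⟩`, which is half the derivative of `r²` at `x`. -/
noncomputable def innerQ (m p : ℕ) (x : Fin (m + 1) → ℝ) : (Fin (m + 1) → ℝ) →L[ℝ] ℝ :=
  ∑ s, xqpart m p x s • ContinuousLinearMap.proj s

lemma innerQ_single (s : Fin (m + 1)) : innerQ m p x (Pi.single s 1) = xqpart m p x s := by
  simp [innerQ, sum_apply, Pi.single_apply]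

lemma rad_nonneg : 0 ≤ rad m p x := Real.sqrt_nonneg _

lemma rad_sq : rad m p x ^ 2 = ∑ s, xqpart m p x s ^ 2 :=
  Real.sq_sqrt (Finset.sum_nonneg fun _ _ => sq_nonneg _)

lemma rad_eq_zero_iff : rad m p x = 0 ↔ xqpart m p x = 0 := by
  rw [← sq_eq_zero_iff, rad_sq, Finset.sum_eq_zero_iff_of_nonneg fun _ _ => sq_nonneg _]
  simp [funext_iff]

lemma rad_le_sqrt_mul_norm : rad m p x ≤ √(m + 1) * ‖x‖ := by
  refine Real.sqrt_le_iff.2 ⟨by positivity, ?_⟩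
  calc ∑ s, xqpart m p x s ^ 2 ≤ ∑ _s : Fin (m + 1), ‖x‖ ^ 2 :=
        Finset.sum_le_sum fun s _ => sq_le_sq' (abs_le.1 (abs_xqpart_le s)).1
          (abs_le.1 (abs_xqpart_le s)).2
    _ = (√(m + 1) * ‖x‖) ^ 2 := by
        rw [mul_pow, Real.sq_sqrt (by positivity)]
        simp

lemma hasFDerivAt_rad (h : rad m p x ≠ 0) :
    HasFDerivAt (rad m p) ((rad m p x)⁻¹ • innerQ m p x) x := by
  have hsq : HasFDerivAt (fun y => ∑ s, xqpart m p y s ^ 2)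
      (∑ s, (2 * xqpart m p x s) • (ContinuousLinearMap.proj s ∘L xqpartL m p)) x := by
    refine HasFDerivAt.fun_sum fun s _ => ?_
    have hs := (ContinuousLinearMap.proj (R := ℝ) s ∘L xqpartL m p).hasFDerivAt (x := x)
    simpa [coe_xqpartL, Function.comp_def] using hs.pow 2
  have hinner : ∑ s, (2 * xqpart m p x s) • (ContinuousLinearMap.proj s ∘L xqpartL m p) =
      (2 : ℝ) • innerQ m p x := by
    ext y
    simp only [innerQ, sum_apply, smul_apply, Finset.smul_sum, coe_xqpartL,
      ContinuousLinearMap.comp_apply, ContinuousLinearMap.proj_apply, smul_eq_mul, mul_assoc]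
    refine Finset.sum_congr rfl fun s _ => ?_
    rcases le_or_gt (s : ℕ) p with hs | hs
    · simp [xqpart_of_le hs]
    · simp [xqpart_of_lt hs]
  have h0 : ∑ s, xqpart m p x s ^ 2 ≠ 0 := by
    rw [← rad_sq]
    exact pow_ne_zero 2 h
  refine (hsq.sqrt h0).congr_fderiv ?_
  rw [hinner, smul_smul, ← rad]
  congr 1
  field_simp

lemma continuous_rad : Continuous (rad m p) := by
  have hxq : Continuous (xqpart m p) := coe_xqpartL ▸ (xqpartL m p).continuous
  unfold rad
  fun_prop

/-- The map `x ↦ (x_p, r)` from `ℝ^{m+1}` to `ℝ^{p+2}`. -/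
noncomputable def rho (m p : ℕ) (x : Fin (m + 1) → ℝ) : (Fin (p + 1) → ℝ) × ℝ :=
  (projP m p x, rad m p x)

lemma continuous_rho : Continuous (rho m p) :=
  (coe_projPL ▸ (projPL m p).continuous).prodMk continuous_rad

variable {V : Type*} [NormedAddCommGroup V] [NormedSpace ℝ V]
  {D : Set ((Fin (p + 1) → ℝ) × ℝ)} {E : (Fin (p + 1) → ℝ) × ℝ → V}

lemma hasFDerivAt_comp_rho_of_rad_eq_zero {E' : (Fin (p + 1) → ℝ) × ℝ →L[ℝ] V}
    (hE : HasFDerivAt E E' (rho m p x)) (h0 : rad m p x = 0) (hr : E' (0, 1) = 0) :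
    HasFDerivAt (fun x => E (rho m p x)) (E' ∘L (projPL m p).prod 0) x := by
  have hrad (y) : rad m p y = rad m p (y - x) := by
    rw [rad, rad, ← coe_xqpartL, map_sub, coe_xqpartL, rad_eq_zero_iff.1 h0, sub_zero]
  have hrad_isBigO : (fun y => rad m p y - rad m p x) =O[𝓝 x] fun y => y - x :=
    Asymptotics.IsBigO.of_bound (√(m + 1)) <| Eventually.of_forall fun y => by
      rw [h0, sub_zero, hrad, Real.norm_of_nonneg rad_nonneg]
      exact rad_le_sqrt_mul_norm
  have hrho_isBigO : (fun y => rho m p y - rho m p x) =O[𝓝 x] fun y => y - x := by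
    have hproj := (projPL m p).isBigO_sub (𝓝 x) x
    simp only [map_sub, coe_projPL] at hproj
    exact hproj.prod_left hrad_isBigO
  have hlittle := hE.isLittleO.comp_tendsto (continuous_rho.tendsto x)
  refine .of_isLittleO ((hlittle.trans_isBigO hrho_isBigO).congr_left fun y => ?_)
  have hsplit : rho m p y - rho m p x = (projP m p (y - x), 0) + rad m p y • (0, 1) := by
    rw [← coe_projPL, map_sub, coe_projPL]
    ext <;> simp [rho, h0]
  simp only [Function.comp_apply, hsplit, map_add, map_smul, hr, smul_zero, add_zero,
    ContinuousLinearMap.comp_apply, ContinuousLinearMap.prod_apply, coe_projPL, zero_apply]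

lemma hasFDerivAt_comp_rho_of_rad_ne_zero {E' : (Fin (p + 1) → ℝ) × ℝ →L[ℝ] V}
    (hE : HasFDerivAt E E' (rho m p x)) (h0 : rad m p x ≠ 0) :
    HasFDerivAt (fun x => E (rho m p x)) (E' ∘L (projPL m p).prod 0 +
      (innerQ m p x).smulRight ((rad m p x)⁻¹ • E' (0, 1))) x := by
  have hproj : HasFDerivAt (projP m p) (projPL m p) x := by
    rw [← coe_projPL]
    exact (projPL m p).hasFDerivAt
  refine (hE.comp x (hproj.prodMk (hasFDerivAt_rad h0))).congr_fderiv ?_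
  ext y
  have hsplit : (projPL m p y, (rad m p x)⁻¹ * innerQ m p x y) =
      (projPL m p y, 0) + ((rad m p x)⁻¹ * innerQ m p x y) • (0, 1) := by
    ext <;> simp
  calc E' (projPL m p y, (rad m p x)⁻¹ * innerQ m p x y)
      = E' (projPL m p y, 0) + ((rad m p x)⁻¹ * innerQ m p x y) • E' (0, 1) := by
        rw [hsplit, map_add, map_smul]
    _ = E' (projPL m p y, 0) + innerQ m p x y • (rad m p x)⁻¹ • E' (0, 1) := by
        rw [smul_smul, mul_comm]

namespace IsSmoothEvenOn

-- At `r = 0` the radius is not differentiable, but `∂_r E = 0` there because `E` is even.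
lemma hasFDerivAt_comp_rho (hE : IsSmoothEvenOn E D) (hD : IsOpen D)
    (hR : ∀ z ∈ D, reflD p z ∈ D) (hx : rho m p x ∈ D) :
    HasFDerivAt (fun x => E (rho m p x)) (fderiv ℝ E (rho m p x) ∘L (projPL m p).prod 0 +
      (innerQ m p x).smulRight (GPSM.T1 p E (rho m p x))) x := by
  have hderiv := (hE.differentiableAt hD hx).hasFDerivAt
  have hT1 : rad m p x • GPSM.T1 p E (rho m p x) = fderiv ℝ E (rho m p x) (0, 1) :=
    hE.snd_smul_T1 hD hR hx
  by_cases h0 : rad m p x = 0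
  · have hinner : innerQ m p x = 0 := by simp [innerQ, rad_eq_zero_iff.1 h0]
    have hr : fderiv ℝ E (rho m p x) (0, 1) = 0 := by rw [← hT1, h0, zero_smul]
    convert hasFDerivAt_comp_rho_of_rad_eq_zero hderiv h0 hr using 1
    ext y
    simp [hinner]
  · simpa [← hT1, smul_smul, h0] using hasFDerivAt_comp_rho_of_rad_ne_zero hderiv h0

lemma contDiffOn_comp_rho [CompleteSpace V] (hE : IsSmoothEvenOn E D) (hD : IsOpen D)
    (hR : ∀ z ∈ D, reflD p z ∈ D) (n : ℕ) :
    ContDiffOn ℝ n (fun x => E (rho m p x)) (rho m p ⁻¹' D) := by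
  induction n generalizing E with
  | zero =>
    exact contDiffOn_zero.2
      (hE.contDiffOn.continuousOn.comp continuous_rho.continuousOn fun x hx => hx)
  | succ n ih =>
    push_cast
    rw [contDiffOn_succ_iff_fderiv_of_isOpen (hD.preimage continuous_rho)]
    refine ⟨fun x hx =>
      (hE.hasFDerivAt_comp_rho hD hR hx).differentiableAt.differentiableWithinAt, by simp, ?_⟩
    rw [contDiffOn_clm_apply]
    intro y
    have hinner : ContDiff ℝ n (fun x => innerQ m p x y) := by
      simp only [innerQ, sum_apply, smul_apply, ← coe_xqpartL]
      fun_prop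
    refine ((ih (hE.fderiv_fst hD hR (projP m p y))).add
      (hinner.contDiffOn.smul (ih (hE.T1 hD hR)))).congr fun x hx => ?_
    rw [(hE.hasFDerivAt_comp_rho hD hR hx).fderiv]
    simp [coe_projPL]

end IsSmoothEvenOn

/-- The derivative in the direction of the `x_p`-part of the `s`-th basis vector of `ℝ^{m+1}`:
`∂_{x_s}` if `s ≤ p`, and `0` otherwise. -/
noncomputable def pdProj (m p : ℕ) (s : Fin (m + 1)) (E : (Fin (p + 1) → ℝ) × ℝ → V)
    (z : (Fin (p + 1) → ℝ) × ℝ) : V :=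
  fderiv ℝ E z (projP m p (Pi.single s 1), 0)

lemma pdProj_of_lt {s : Fin (m + 1)} (hs : p < (s : ℕ)) (z : (Fin (p + 1) → ℝ) × ℝ) :
    pdProj m p s E z = 0 := by
  have hproj : projP m p (Pi.single s 1) = 0 := by
    ext j
    have hj (h : (j : ℕ) < m + 1) : (⟨j, h⟩ : Fin (m + 1)) ≠ s := by
      rw [Ne, Fin.ext_iff]
      lia
    simp [projP, hj]
  rw [pdProj, hproj, ← Prod.zero_eq_mk, map_zero]

lemma pdProj_castLE (hp : p ≤ m) (s : Fin (p + 1)) (z : (Fin (p + 1) → ℝ) × ℝ) :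
    pdProj m p (s.castLE (by lia)) E z = pdSx p s E z := by
  have hproj : projP m p (Pi.single (s.castLE (by lia)) 1) = Pi.single s 1 := by
    ext j
    have hj : (j : ℕ) < m + 1 := by lia
    simp [projP, hj, Pi.single_apply, Fin.ext_iff]
  rw [pdProj, hproj, pdSx]

lemma sum_pdProj (hp : p ≤ m) (L : ℕ → V →L[ℝ] V) (z : (Fin (p + 1) → ℝ) × ℝ) :
    ∑ s : Fin (m + 1), L s (pdProj m p s E z) = diracSx L p E z := by
  refine (Finset.sum_of_injOn (Fin.castLE (by lia)) (Fin.castLE_injective _).injOn (by simp)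
    (fun s _ hs => ?_) fun s _ => by rw [pdProj_castLE hp, Fin.val_castLE]).symm
  have hps : p < (s : ℕ) := by
    by_contra! h
    exact hs ⟨⟨s, by lia⟩, by simp, rfl⟩
  rw [pdProj_of_lt hps, map_zero]

lemma IsSmoothEvenOn.pdF_comp_rho (hE : IsSmoothEvenOn E D) (hD : IsOpen D)
    (hR : ∀ z ∈ D, reflD p z ∈ D) (hx : rho m p x ∈ D) (s : Fin (m + 1)) :
    pdF m s (fun x => E (rho m p x)) x =
      pdProj m p s E (rho m p x) + xqpart m p x s • GPSM.T1 p E (rho m p x) := by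
  rw [pdF, (hE.hasFDerivAt_comp_rho hD hR hx).fderiv]
  simp [pdProj, innerQ_single, coe_projPL]

end Rho

/-! ### Dirac and Laplace operators on `ℝ^{m+1}` -/

section DiracOperator
variable {V : Type*} [NormedAddCommGroup V] [NormedSpace ℝ V] {L : ℕ → V →L[ℝ] V} {m : ℕ}
  {Ω : Set (Fin (m + 1) → ℝ)} {u w : (Fin (m + 1) → ℝ) → V} {x : Fin (m + 1) → ℝ}

/-- The operator `∑ₛ Lₛ ∂_{xₛ}` on functions on `ℝ^{m+1}`; for `Lₛ` the left multiplication by `vₛ`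
this is `D_x`, and `D̄_x` for the conjugate system. -/
noncomputable def diracF (L : ℕ → V →L[ℝ] V) (m : ℕ) (u : (Fin (m + 1) → ℝ) → V)
    (x : Fin (m + 1) → ℝ) : V :=
  ∑ s : Fin (m + 1), L s (pdF m s u x)

lemma pdF_congr (hΩ : IsOpen Ω) (h : Set.EqOn u w Ω) (s : Fin (m + 1)) :
    Set.EqOn (pdF m s u) (pdF m s w) Ω := fun x hx => by
  rw [pdF, pdF, (h.eventuallyEq_of_mem (hΩ.mem_nhds hx)).fderiv_eq]

lemma pdF_const_smul (c : ℝ) (s : Fin (m + 1)) : pdF m s (c • u) = c • pdF m s u := by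
  ext x
  simp [pdF, fderiv_const_smul_field]

lemma diracF_congr (hΩ : IsOpen Ω) (h : Set.EqOn u w Ω) :
    Set.EqOn (diracF L m u) (diracF L m w) Ω := fun x hx => by
  simp only [diracF, pdF_congr hΩ h _ hx]

lemma diracF_const_smul (c : ℝ) : diracF L m (c • u) x = c • diracF L m u x := by
  simp [diracF, pdF_const_smul, Finset.smul_sum]

lemma lapF_congr (hΩ : IsOpen Ω) (h : Set.EqOn u w Ω) :
    Set.EqOn (lapF m u) (lapF m w) Ω := fun x hx => by
  simp only [lapF, pdF_congr hΩ (pdF_congr hΩ h _) _ hx]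

lemma lapF_const_smul (c : ℝ) : lapF m (c • u) x = c • lapF m u x := by
  simp [lapF, pdF_const_smul, Finset.smul_sum]

lemma IsCliffordSystem.isDiracPair (h : IsCliffordSystem L m) :
    IsDiracPair (fun s : Fin (m + 1) => L s) (fun s => GPSM.cliffordConj L s) where
  add_comp s t a := by
    simpa only [Fin.ext_iff] using
      h.conj_apply_add_conj_apply (Nat.lt_succ_iff.1 s.2) (Nat.lt_succ_iff.1 t.2) a

lemma pdF_diracF (hu : DifferentiableAt ℝ (fderiv ℝ u) x) (s : Fin (m + 1)) :
    pdF m s (diracF L m u) x = ∑ t : Fin (m + 1), L t (pdF m s (pdF m t u) x) := by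
  have hderiv : HasFDerivAt (diracF L m u) (∑ t : Fin (m + 1), L t ∘L fderiv ℝ (pdF m t u) x) x :=
    HasFDerivAt.fun_sum fun t _ =>
      (L t).hasFDerivAt.comp x (hu.clm_apply (differentiableAt_const _)).hasFDerivAt
  rw [pdF, hderiv.fderiv, sum_apply]
  rfl

lemma pdF_comm (hΩ : IsOpen Ω) (hu : ContDiffOn ℝ 2 u Ω) (hx : x ∈ Ω) (s t : Fin (m + 1)) :
    pdF m s (pdF m t u) x = pdF m t (pdF m s u) x := by
  have hd : DifferentiableAt ℝ (fderiv ℝ u) x :=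
    ((hu.contDiffAt (hΩ.mem_nhds hx)).fderiv_right (m := 1) (by norm_num)).differentiableAt
      one_ne_zero
  have second (s t : Fin (m + 1)) :
      pdF m s (pdF m t u) x = fderiv ℝ (fderiv ℝ u) x (Pi.single s 1) (Pi.single t 1) := by
    change fderiv ℝ (fun y => fderiv ℝ u y (Pi.single t 1)) x (Pi.single s 1) = _
    rw [fderiv_clm_apply hd (differentiableAt_const _)]
    simp
  rw [second, second]
  exact (hu.contDiffAt (hΩ.mem_nhds hx)).isSymmSndFDerivAt (by simp) _ _

lemma IsCliffordSystem.diracF_cliffordConj_diracF (h : IsCliffordSystem L m) (hΩ : IsOpen Ω)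
    (hu : ContDiffOn ℝ 2 u Ω) (hx : x ∈ Ω) :
    diracF (GPSM.cliffordConj L) m (diracF L m u) x = lapF m u x := by
  have hd : DifferentiableAt ℝ (fderiv ℝ u) x :=
    ((hu.contDiffAt (hΩ.mem_nhds hx)).fderiv_right (m := 1) (by norm_num)).differentiableAt
      one_ne_zero
  rw [diracF]
  simp only [pdF_diracF hd, map_sum]
  exact h.isDiracPair.sum_sum_apply_of_symm fun s t => pdF_comm hΩ hu hx s t

end DiracOperator

/-! ### The functions `x ↦ E(x_p, r) + x_q G(x_p, r)` -/

section InducedFun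
variable {V : Type*} [NormedAddCommGroup V] [NormedSpace ℝ V] {L : ℕ → V →L[ℝ] V} {m p : ℕ}
  {D : Set ((Fin (p + 1) → ℝ) × ℝ)} {E G : (Fin (p + 1) → ℝ) × ℝ → V} {x : Fin (m + 1) → ℝ}

/-- The Clifford action `w ↦ ∑ₛ wₛ Lₛ` of `ℝ^{m+1}`; for `Lₛ` the left multiplication by `vₛ` this
is left multiplication by `emb v m w`. -/
noncomputable def cliffordMap (L : ℕ → V →L[ℝ] V) (m : ℕ) : (Fin (m + 1) → ℝ) →L[ℝ] V →L[ℝ] V :=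
  ∑ s : Fin (m + 1), (ContinuousLinearMap.proj s).smulRight (L s)

lemma cliffordMap_apply (y : Fin (m + 1) → ℝ) (a : V) :
    cliffordMap L m y a = ∑ s : Fin (m + 1), y s • L s a := by
  simp [cliffordMap, sum_apply]

lemma cliffordMap_xqpart_single (s : Fin (m + 1)) (a : V) :
    cliffordMap L m (xqpart m p (Pi.single s 1)) a = if (s : ℕ) ≤ p then 0 else L s a := by
  have hsingle : xqpart m p (Pi.single s 1) = if (s : ℕ) ≤ p then 0 else Pi.single s 1 := by
    ext t
    rcases eq_or_ne t s with rfl | hts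
    · simp only [xqpart]
      split_ifs <;> simp
    · simp only [xqpart]
      split_ifs <;> simp [hts]
  rw [hsingle]
  split_ifs
  · simp
  · simp [cliffordMap_apply, Pi.single_apply]

namespace IsCliffordSystem

lemma cliffordMap_cliffordMap (h : IsCliffordSystem L m) {y : Fin (m + 1) → ℝ} (hy : y 0 = 0)
    (a : V) : cliffordMap L m y (cliffordMap L m y a) = -((∑ s, y s ^ 2) • a) := by
  have hconj (s : Fin (m + 1)) (b : V) : y s • L s b = -(y s • GPSM.cliffordConj L s b) := by
    rcases eq_or_ne s 0 with rfl | hs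
    · simp [hy]
    · simp [cliffordConj_of_ne_zero (Fin.val_ne_zero_iff.2 hs)]
  calc cliffordMap L m y (cliffordMap L m y a)
      = -∑ s : Fin (m + 1), ∑ t : Fin (m + 1),
          GPSM.cliffordConj L s (L t ((y s * y t) • a)) := by
        rw [cliffordMap_apply, Finset.sum_congr rfl fun s _ => hconj s _, Finset.sum_neg_distrib]
        simp only [cliffordMap_apply, map_sum, map_smul, Finset.smul_sum, smul_smul]
    _ = -((∑ s, y s ^ 2) • a) := by
        rw [h.isDiracPair.sum_sum_apply_of_symm (B := fun s t => (y s * y t) • a)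
          fun s t => by rw [mul_comm], Finset.sum_smul]
        simp only [pow_two]

lemma cliffordMap_xqpart_sq (h : IsCliffordSystem L m) (a : V) :
    cliffordMap L m (xqpart m p x) (cliffordMap L m (xqpart m p x) a) =
      -(rad m p x ^ 2 • a) := by
  rw [h.cliffordMap_cliffordMap (xqpart_of_le (by simp)), rad_sq]

lemma apply_cliffordMap_xqpart (h : IsCliffordSystem L m) {s : ℕ} (hs : s ≤ p) (a : V) :
    L s (cliffordMap L m (xqpart m p x) a) =
      cliffordMap L m (xqpart m p x) (GPSM.cliffordConj L s a) := by
  simp only [cliffordMap_apply, map_sum, map_smul]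
  refine Finset.sum_congr rfl fun t _ => ?_
  rcases le_or_gt (t : ℕ) p with ht | ht
  · simp [xqpart_of_le ht]
  · rw [h.apply_apply_of_lt (hs.trans_lt ht) (by lia)]

lemma apply_cliffordMap_xqpart_single (h : IsCliffordSystem L m) (s : Fin (m + 1)) (a : V) :
    L s (cliffordMap L m (xqpart m p (Pi.single s 1)) a) = if (s : ℕ) ≤ p then 0 else -a := by
  rw [cliffordMap_xqpart_single]
  split_ifs with hs
  · simp
  · rw [h.sq s (by lia) (by lia)]

lemma apply_cliffordMap_pdProj (h : IsCliffordSystem L m) (s : Fin (m + 1))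
    (z : (Fin (p + 1) → ℝ) × ℝ) :
    L s (cliffordMap L m (xqpart m p x) (pdProj m p s G z)) =
      cliffordMap L m (xqpart m p x) (GPSM.cliffordConj L s (pdProj m p s G z)) := by
  rcases le_or_gt (s : ℕ) p with hs | hs
  · exact h.apply_cliffordMap_xqpart hs _
  · simp [pdProj_of_lt hs]

end IsCliffordSystem

lemma sum_ite_le_neg (hp : p ≤ m) (a : V) :
    ∑ s : Fin (m + 1), (if (s : ℕ) ≤ p then 0 else -a) = -(((m - p : ℕ) : ℝ) • a) := by
  obtain ⟨q, rfl⟩ := Nat.exists_eq_add_of_le hp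
  rw [Fin.sum_univ_eq_sum_range (fun s => if s ≤ p then 0 else -a), add_right_comm,
    Finset.sum_range_add, Finset.sum_eq_zero fun s hs => if_pos (by grind),
    Finset.sum_congr rfl fun s _ => if_neg (by lia)]
  simp [Nat.cast_smul_eq_nsmul]

/-- The function `x ↦ E(x_p, r) + x_q G(x_p, r)`, which is the generalized partial-slice function
induced by the stem function `(E, r G)`. -/
noncomputable def inducedFun (L : ℕ → V →L[ℝ] V) (m : ℕ) (E G : (Fin (p + 1) → ℝ) × ℝ → V)
    (x : Fin (m + 1) → ℝ) : V :=
  E (rho m p x) + cliffordMap L m (xqpart m p x) (G (rho m p x))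

lemma contDiffOn_inducedFun [CompleteSpace V] (hD : IsOpen D) (hR : ∀ z ∈ D, reflD p z ∈ D)
    (hE : IsSmoothEvenOn E D) (hG : IsSmoothEvenOn G D) (n : ℕ) :
    ContDiffOn ℝ n (inducedFun L m E G) (rho m p ⁻¹' D) := by
  have hxq : ContDiff ℝ n fun x => cliffordMap L m (xqpart m p x) := by
    rw [← coe_xqpartL]
    exact (cliffordMap L m ∘L xqpartL m p).contDiff
  exact (hE.contDiffOn_comp_rho hD hR n).add
    (hxq.contDiffOn.clm_apply (hG.contDiffOn_comp_rho hD hR n))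

lemma pdF_inducedFun (hE : DifferentiableAt ℝ (fun x => E (rho m p x)) x)
    (hG : DifferentiableAt ℝ (fun x => G (rho m p x)) x) (s : Fin (m + 1)) :
    pdF m s (inducedFun L m E G) x = pdF m s (fun x => E (rho m p x)) x +
      cliffordMap L m (xqpart m p x) (pdF m s (fun x => G (rho m p x)) x) +
      cliffordMap L m (xqpart m p (Pi.single s 1)) (G (rho m p x)) := by
  have hxq : HasFDerivAt (fun x => cliffordMap L m (xqpart m p x))
      (cliffordMap L m ∘L xqpartL m p) x := by
    rw [← coe_xqpartL]
    exact (cliffordMap L m ∘L xqpartL m p).hasFDerivAt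
  have hderiv := hE.hasFDerivAt.fun_add (hxq.clm_apply hG.hasFDerivAt)
  change fderiv ℝ (fun x => E (rho m p x) + cliffordMap L m (xqpart m p x) (G (rho m p x))) x _ = _
  rw [hderiv.fderiv]
  simp [pdF, coe_xqpartL, add_assoc]

namespace IsVekuaPair
variable {c : ℝ}

lemma diracF_inducedFun (h : IsVekuaPair L c E G D) (hL : IsCliffordSystem L m) (hp : p ≤ m)
    (hD : IsOpen D) (hR : ∀ z ∈ D, reflD p z ∈ D) (hx : rho m p x ∈ D) :
    diracF L m (inducedFun L m E G) x = (c - (m - p : ℕ)) • G (rho m p x) := by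
  have term (s : Fin (m + 1)) : L s (pdF m s (inducedFun L m E G) x) =
      L s (pdProj m p s E (rho m p x)) + xqpart m p x s • L s (GPSM.T1 p E (rho m p x)) +
      cliffordMap L m (xqpart m p x) (cliffordConj L s (pdProj m p s G (rho m p x))) +
      xqpart m p x s • L s (cliffordMap L m (xqpart m p x) (GPSM.T1 p G (rho m p x))) +
      (if (s : ℕ) ≤ p then 0 else -G (rho m p x)) := by
    rw [pdF_inducedFun (h.even_fst.hasFDerivAt_comp_rho hD hR hx).differentiableAt
      (h.even_snd.hasFDerivAt_comp_rho hD hR hx).differentiableAt,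
      h.even_fst.pdF_comp_rho hD hR hx, h.even_snd.pdF_comp_rho hD hR hx]
    simp only [map_add, map_smul, hL.apply_cliffordMap_pdProj, hL.apply_cliffordMap_xqpart_single,
      add_assoc]
  simp only [diracF, term, Finset.sum_add_distrib]
  rw [sum_ite_le_neg hp, sum_pdProj hp, ← map_sum, sum_pdProj hp, ← cliffordMap_apply,
    ← cliffordMap_apply, hL.cliffordMap_xqpart_sq, h.diracSx_fst _ hx, h.diracSx_snd _ hx, map_neg,
    rho]
  module

lemma diracF_comp_rho (h : IsVekuaPair L c E G D) (hp : p ≤ m) (hD : IsOpen D)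
    (hR : ∀ z ∈ D, reflD p z ∈ D) (hx : rho m p x ∈ D) :
    diracF (cliffordConj L) m (fun x => G (rho m p x)) x =
      -inducedFun L m (GPSM.T1 p E) (GPSM.T1 p G) x := by
  have term (s : Fin (m + 1)) : cliffordConj L s (pdF m s (fun x => G (rho m p x)) x) =
      cliffordConj L s (pdProj m p s G (rho m p x)) +
        -(xqpart m p x s • L s (GPSM.T1 p G (rho m p x))) := by
    rw [h.even_snd.pdF_comp_rho hD hR hx, map_add, map_smul]
    rcases le_or_gt (s : ℕ) p with hs | hs
    · simp [xqpart_of_le hs]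
    · simp [cliffordConj_of_ne_zero (Nat.ne_zero_of_lt hs)]
  simp only [diracF, term, Finset.sum_add_distrib, Finset.sum_neg_distrib]
  rw [sum_pdProj hp, h.diracSx_snd _ hx, ← cliffordMap_apply, inducedFun, neg_add]

variable [CompleteSpace V]

lemma lapF_inducedFun (h : IsVekuaPair L c E G D) (hL : IsCliffordSystem L m) (hp : p ≤ m)
    (hD : IsOpen D) (hR : ∀ z ∈ D, reflD p z ∈ D) (hx : rho m p x ∈ D) :
    lapF m (inducedFun L m E G) x =
      ((m - p : ℕ) - c) • inducedFun L m (GPSM.T1 p E) (GPSM.T1 p G) x := by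
  have hΩ : IsOpen (rho m p ⁻¹' D) := hD.preimage continuous_rho
  have hdirac : Set.EqOn (diracF L m (inducedFun L m E G))
      ((c - (m - p : ℕ)) • fun x => G (rho m p x)) (rho m p ⁻¹' D) :=
    fun y hy => h.diracF_inducedFun hL hp hD hR hy
  calc lapF m (inducedFun L m E G) x
      = diracF (cliffordConj L) m (diracF L m (inducedFun L m E G)) x :=
        (hL.diracF_cliffordConj_diracF hΩ
          (contDiffOn_inducedFun hD hR h.even_fst h.even_snd 2) hx).symm
    _ = (c - (m - p : ℕ)) • diracF (cliffordConj L) m (fun x => G (rho m p x)) x := by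
        rw [diracF_congr hΩ hdirac hx, diracF_const_smul]
    _ = ((m - p : ℕ) - c) • inducedFun L m (GPSM.T1 p E) (GPSM.T1 p G) x := by
        rw [h.diracF_comp_rho hp hD hR hx]
        module

lemma lapIterF_inducedFun (h : IsVekuaPair L 1 E G D) (hL : IsCliffordSystem L m) (hp : p ≤ m)
    (hD : IsOpen D) (hR : ∀ z ∈ D, reflD p z ∈ D) {f : (Fin (m + 1) → ℝ) → V}
    (hf : Set.EqOn f (inducedFun L m E G) (rho m p ⁻¹' D)) (k : ℕ) :
    Set.EqOn (lapIterF m k f)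
      (cq (m - p) k • inducedFun L m ((GPSM.T1 p)^[k] E) ((GPSM.T1 p)^[k] G)) (rho m p ⁻¹' D) := by
  induction k with
  | zero => simpa [cq, lapIterF] using hf
  | succ k ih =>
    intro x hx
    rw [lapIterF, Function.iterate_succ_apply', ← lapIterF,
      lapF_congr (hD.preimage continuous_rho) ih hx, lapF_const_smul,
      (h.iterate_T1 hD hR k).lapF_inducedFun hL hp hD hR hx, Function.iterate_succ_apply',
      Function.iterate_succ_apply', Pi.smul_apply, smul_smul, cq, cq, Finset.prod_range_succ,
      add_comm (1 : ℝ)]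

end IsVekuaPair

lemma cq_two_mul_add_one (k : ℕ) : cq (2 * k + 1) k = dfac (2 * k) := by
  induction k with
  | zero => simp [cq, dfac]
  | succ k ih =>
    rw [show dfac (2 * (k + 1)) = (2 * k + 2) * dfac (2 * k) from rfl, Nat.cast_mul, ← ih, cq, cq,
      Finset.prod_range_succ', mul_comm]
    push_cast
    congr 1
    · ring
    · exact Finset.prod_congr rfl fun i _ => by ring

end InducedFun

/-! ### The domain `Ω_D` and functions induced by stem functions -/

section Omega
variable {m p : ℕ} {w x : Fin (m + 1) → ℝ}

lemma projP_pt (hp : p ≤ m) (hw : ∀ s : Fin (m + 1), (s : ℕ) ≤ p → w s = 0)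
    (y : Fin (p + 1) → ℝ) (r : ℝ) : projP m p (pt m p w y r) = y := by
  ext s
  have hs : (s : ℕ) < m + 1 := by lia
  simp [projP, pt, injP, hs, hw ⟨s, hs⟩ s.is_le, s.is_le]

lemma xqpart_pt (hw : ∀ s : Fin (m + 1), (s : ℕ) ≤ p → w s = 0) (y : Fin (p + 1) → ℝ) (r : ℝ) :
    xqpart m p (pt m p w y r) = r • w := by
  ext s
  rcases le_or_gt (s : ℕ) p with hs | hs
  · simp [xqpart_of_le hs, hw s hs]
  · simp [xqpart_of_lt hs, pt, injP, hs.not_ge]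

lemma pt_projP_rad (h : rad m p x • w = xqpart m p x) :
    pt m p w (projP m p x) (rad m p x) = x := by
  ext s
  rw [pt, h, Pi.add_apply]
  rcases le_or_gt (s : ℕ) p with hs | hs
  · simp [xqpart_of_le hs, injP, projP, Nat.lt_succ_iff.2 hs, s.is_le]
  · simp [xqpart_of_lt hs, injP, hs.not_ge]

lemma rad_smul_normq : rad m p x • normq m p x = xqpart m p x := by
  rcases eq_or_ne (rad m p x) 0 with h0 | h0
  · rw [h0, zero_smul, rad_eq_zero_iff.1 h0]
  · rw [normq, smul_inv_smul₀ h0]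

variable {A : Type*} [NormedAddCommGroup A] [NormedSpace ℝ A] [Mul A] [One A] {conj : A → A}
  {v : ℕ → A} {D : Set ((Fin (p + 1) → ℝ) × ℝ)} {E G K F₁ F₂ : (Fin (p + 1) → ℝ) × ℝ → A}
  {f : (Fin (m + 1) → ℝ) → A}

namespace IsAltStarAlg

lemma emb_mul (H : IsAltStarAlg A conj) (y : Fin (m + 1) → ℝ) (a : A) :
    emb v m y * a = cliffordMap (fun s => lmul H (v s)) m y a := by
  rw [← H.lmul_apply, emb, cliffordMap_apply]
  simp only [map_sum, map_smul, sum_apply, smul_apply]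

lemma dop_eq_diracF (H : IsAltStarAlg A conj) :
    Dop v m 0 m f x = diracF (fun s => lmul H (v s)) m f x := by
  simp [Dop, diracF, H.lmul_apply, Nat.lt_succ_iff.1 (Fin.is_lt _)]

lemma inducedFun_eq (H : IsAltStarAlg A conj) (hw : rad m p x • w = xqpart m p x)
    (hK : K (rho m p x) = rad m p x • G (rho m p x)) :
    inducedFun (fun s => lmul H (v s)) m E G x = E (rho m p x) + emb v m w * K (rho m p x) := by
  rw [inducedFun, hK, H.emb_mul, map_smul, ← smul_apply, ← map_smul, hw]

end IsAltStarAlg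

namespace IsHypBasis

lemma emb_mul_self (hv : IsHypBasis A conj v m) (H : IsAltStarAlg A conj) (hw : w 0 = 0) :
    emb v m w * emb v m w = -((∑ s, w s ^ 2) • (1 : A)) := by
  rw [H.emb_mul, ← (hv.isCliffordSystem H).cliffordMap_cliffordMap hw, ← H.emb_mul w 1, H.mul_one']

lemma mem_Sph_iff (hv : IsHypBasis A conj v m) (H : IsAltStarAlg A conj)
    (hw : ∀ s : Fin (m + 1), (s : ℕ) ≤ p → w s = 0) : w ∈ Sph v m p ↔ ∑ s, w s ^ 2 = 1 := by
  have hsq : emb v m w * emb v m w = -1 ↔ (∑ s, w s ^ 2) • (1 : A) = (1 : ℝ) • (1 : A) := by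
    rw [hv.emb_mul_self H (hw 0 (by simp)), neg_inj, one_smul]
  exact (and_iff_right hw).trans (hsq.trans (smul_left_injective ℝ H.one_ne_zero).eq_iff)

lemma rho_mem (hv : IsHypBasis A conj v m) (H : IsAltStarAlg A conj) (hp : p ≤ m)
    (hR : ∀ z ∈ D, reflD p z ∈ D) (hx : x ∈ OmegaD v m p D) : rho m p x ∈ D := by
  obtain ⟨w, hw, z, hz, rfl⟩ := hx
  have hrad : rad m p (pt m p w z.1 z.2) = |z.2| := by
    simp [rad, xqpart_pt hw.1, mul_pow, ← Finset.mul_sum, (hv.mem_Sph_iff H hw.1).1 hw,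
      Real.sqrt_sq_eq_abs]
  rw [rho, hrad, projP_pt hp hw.1]
  rcases abs_choice z.2 with h | h <;> rw [h]
  exacts [hz, hR z hz]

lemma exists_mem_Sph (hv : IsHypBasis A conj v m) (H : IsAltStarAlg A conj) (hp : p < m)
    (x : Fin (m + 1) → ℝ) : ∃ w ∈ Sph v m p, rad m p x • w = xqpart m p x := by
  rcases eq_or_ne (rad m p x) 0 with h0 | h0
  · refine ⟨Pi.single (Fin.last m) 1, (hv.mem_Sph_iff H fun s hs => ?_).2 ?_, ?_⟩
    · exact Pi.single_eq_of_ne (by grind) 1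
    · simp [Pi.single_apply]
    · rw [h0, zero_smul, rad_eq_zero_iff.1 h0]
  · refine ⟨normq m p x, (hv.mem_Sph_iff H fun s hs => ?_).2 ?_, rad_smul_normq⟩
    · simp [normq, xqpart_of_le hs]
    · simp only [normq, Pi.smul_apply, smul_eq_mul, mul_pow, ← Finset.mul_sum, ← rad_sq]
      field_simp

end IsHypBasis

lemma Induced.eqOn_inducedFun (hf : Induced v m p D F₁ F₂ f) (H : IsAltStarAlg A conj)
    (hv : IsHypBasis A conj v m) (hp : p < m) (hG : ∀ z ∈ D, F₂ z = z.2 • G z) :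
    Set.EqOn f (inducedFun (fun s => lmul H (v s)) m F₁ G) (rho m p ⁻¹' D) := fun x hx => by
  obtain ⟨w, hw, hxw⟩ := hv.exists_mem_Sph H hp x
  rw [H.inducedFun_eq hxw (hG _ hx), ← hf w hw _ hx]
  exact congrArg f (pt_projP_rad hxw).symm

lemma IsVekuaPair.monogenic {c : ℝ} [CompleteSpace A] {H : IsAltStarAlg A conj}
    (h : IsVekuaPair (fun s => lmul H (v s)) (m - p : ℕ) E G D) (hv : IsHypBasis A conj v m)
    (hp : p ≤ m) (hD : IsOpen D) (hR : ∀ z ∈ D, reflD p z ∈ D)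
    (hf : Set.EqOn f (c • inducedFun (fun s => lmul H (v s)) m E G) (rho m p ⁻¹' D)) :
    Monogenic v m f (rho m p ⁻¹' D) := by
  refine ⟨((contDiffOn_inducedFun hD hR h.even_fst h.even_snd 1).const_smul c).congr hf,
    fun x hx => ?_⟩
  rw [H.dop_eq_diracF, diracF_congr (hD.preimage continuous_rho) hf hx, diracF_const_smul,
    h.diracF_inducedFun (hv.isCliffordSystem H) hp hD hR hx, sub_self, zero_smul, smul_zero]

end Omega

/-- **Fueter-Sce theorem.** For odd `q` and `f = F₁ + ωF₂ ∈ GSR(Ω_D)`, the function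
`Δ_x^{(q-1)/2} f` is left monogenic in `Ω_D` and
`Δ_x^{(q-1)/2} f = (q-1)!! (A + ω B)` with
`A = ((1/r)∂_r)^{(q-1)/2} F₁`, `B = (∂_r ∘ (1/r))^{(q-1)/2} F₂`. -/
theorem fueter_sce
    {A : Type*} [NormedAddCommGroup A] [NormedSpace ℝ A] [Mul A] [One A]
    (conj : A → A) (H : IsAltStarAlg A conj)
    (v : ℕ → A) (m p : ℕ) (hv : IsHypBasis A conj v m) (hp : p < m)
    (hq : Odd (m - p))
    (D : Set ((Fin (p + 1) → ℝ) × ℝ)) (hD : IsOpen D)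
    (hDrefl : ∀ z ∈ D, reflD p z ∈ D)
    (F₁ F₂ : (Fin (p + 1) → ℝ) × ℝ → A) (hstem : IsStem p D F₁ F₂)
    (hF₁ : ContDiffOn ℝ 1 F₁ D) (hF₂ : ContDiffOn ℝ 1 F₂ D)
    (f : (Fin (m + 1) → ℝ) → A) (hind : Induced v m p D F₁ F₂ f)
    (hCR : StemCR v p D F₁ F₂) :
    Monogenic v m (lapIterF m ((m - p - 1) / 2) f) (OmegaD v m p D) ∧
    (∀ x ∈ OmegaD v m p D,
      lapIterF m ((m - p - 1) / 2) f x =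
        ((dfac (m - p - 1) : ℝ)) •
          (((T1 p)^[(m - p - 1) / 2] F₁) (projP m p x, rad m p x) +
            emb v m (normq m p x) *
              ((T2 p)^[(m - p - 1) / 2] F₂) (projP m p x, rad m p x))) := by
  have := H.finDim
  have := FiniteDimensional.complete ℝ A
  have hL := hv.isCliffordSystem H
  have hF₂G (z) (hz : z ∈ D) : F₂ z = z.2 • hadamardQuotient F₂ z :=
    (smul_hadamardQuotient (eq_zero_of_neg_snd (hstem z hz).2)).symm
  have hpair : IsVekuaPair (fun s => lmul H (v s)) 1 F₁ (hadamardQuotient F₂) D :=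
    (hCR.isStemRegularOn H hv.v_zero).isVekuaPair hL hp.le hD hDrefl hstem hF₁ hF₂
  have hΩ : OmegaD v m p D ⊆ rho m p ⁻¹' D := fun x hx => hv.rho_mem H hp.le hDrefl hx
  obtain ⟨k, hk⟩ := hq
  rw [show (m - p - 1) / 2 = k by lia, show m - p - 1 = 2 * k by lia, ← cq_two_mul_add_one, ← hk]
  have hlap := hpair.lapIterF_inducedFun hL hp.le hD hDrefl
    (hind.eqOn_inducedFun H hv hp hF₂G) k
  have hpair_k := hpair.iterate_T1 hD hDrefl k
  rw [show (1 + 2 * k : ℝ) = (m - p : ℕ) by rw [hk]; push_cast; ring] at hpair_k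
  have hmon := hpair_k.monogenic hv hp.le hD hDrefl hlap
  refine ⟨⟨hmon.1.mono hΩ, fun x hx => hmon.2 x (hΩ hx)⟩, fun x hx => ?_⟩
  rw [hlap (hΩ hx), Pi.smul_apply, H.inducedFun_eq rad_smul_normq
    (iterate_T2_eq_snd_smul_iterate_T1 hpair.even_snd hD hDrefl hF₂G k _ (hΩ hx)), rho]

end GPSM
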